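/- arXiv:2408.04642 — 2 statements merged into one kernel-verified Lean document; each statement's English description precedes it below -/
import Mathlib

section
/- Let G be a 2-factor Hamiltonian k-regular bipartite graph (k ≥ 1). Then k ≤ 3. -/
open SimpleGraph

/-- A 2-factor of `G`: a 2-regular spanning subgraph, given as a simple graph `F ≤ G`
in which every vertex has exactly two neighbours. -/
def IsTwoFactor {V : Type*} (G F : SimpleGraph V) : Prop :=
  F ≤ G ∧ ∀ v : V, (F.neighborSet v).ncard = 2

/-- A graph admitting a 2-factor is 2-factor Hamiltonian if every 2-factor of it is a
Hamiltonian cycle, i.e. every 2-factor is connected. -/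
def TwoFactorHamiltonian {V : Type*} (G : SimpleGraph V) : Prop :=
  (∃ F, IsTwoFactor G F) ∧ ∀ F, IsTwoFactor G F → F.Connected

namespace TFH
open Finset
open scoped Classical

set_option linter.all false
variable {A B : Type*}

/-- partial matching of `R` into `C` -/
def PM (P : B → A → Prop) (R : Finset B) (C : Finset A) : Prop :=
  ∃ e : B → A, Set.InjOn e R ∧ ∀ b ∈ R, e b ∈ C ∧ P b (e b)

noncomputable def nb (P : B → A → Prop) (C : Finset A) (S : Finset B) : Finset A :=
  C.filter (fun a => ∃ b ∈ S, P b a)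

/-- pattern -/
def pat (s : B → A → ℝ) : B → A → Prop := fun b a => s b a ≠ 0

def Pf (s : B → A → ℝ) (R : Finset B) (C : Finset A) : Prop :=
  ∀ w : B → A → ℝ, (∀ b a, 0 ≤ w b a) → PM (fun b a => w b a ≠ 0 ∧ s b a ≠ 0) R C →
    ∀ v : A → ℝ, (∀ b ∈ R, ∑ a ∈ C, w b a * s b a * v a = 0) → ∀ a ∈ C, v a = 0

def Elem (P : B → A → Prop) (R : Finset B) (C : Finset A) : Prop :=
  R.card = C.card ∧ ∀ S ⊆ R, S.Nonempty → S.card < R.card → S.card + 1 ≤ (nb P C S).card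

def Brace (P : B → A → Prop) (R : Finset B) (C : Finset A) : Prop :=
  R.card = C.card ∧ ∀ S ⊆ R, S.Nonempty → S.card + 2 ≤ R.card → S.card + 2 ≤ (nb P C S).card

noncomputable def ec (P : B → A → Prop) (R : Finset B) (C : Finset A) : ℕ :=
  ∑ b ∈ R, (C.filter (fun a => P b a)).card

theorem mem_nb {P : B → A → Prop} {C : Finset A} {S : Finset B} {a : A} :
    a ∈ nb P C S ↔ a ∈ C ∧ ∃ b ∈ S, P b a := by simp [nb]

theorem nb_sub (P : B → A → Prop) (C : Finset A) (S : Finset B) : nb P C S ⊆ C :=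
  Finset.filter_subset _ _

theorem PM.mono {P Q : B → A → Prop} {R : Finset B} {C D : Finset A} (h : PM P R C)
    (hPQ : ∀ b ∈ R, ∀ a ∈ C, P b a → Q b a) (hCD : C ⊆ D) : PM Q R D := by
  obtain ⟨e, he, h⟩ := h
  exact ⟨e, he, fun b hb => ⟨hCD (h b hb).1, hPQ b hb _ (h b hb).1 (h b hb).2⟩⟩

theorem PM.glue {P : B → A → Prop} {R R' : Finset B} {C C' : Finset A} (h : PM P R C)
    (h' : PM P R' C') (hR : Disjoint R R') (hC : Disjoint C C') : PM P (R ∪ R') (C ∪ C') := by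
  obtain ⟨e, he, h⟩ := h
  obtain ⟨e', he', h'⟩ := h'
  refine ⟨fun b => if b ∈ R then e b else e' b, ?_, ?_⟩
  · intro x hx y hy hxy
    simp only [coe_union, Set.mem_union, mem_coe] at hx hy
    by_cases h1 : x ∈ R <;> by_cases h2 : y ∈ R <;> simp only [h1, h2, if_true, if_false] at hxy
    · exact he h1 h2 hxy
    · exact absurd (h x h1).1 (fun hh => (Finset.disjoint_left.1 hC hh) (hxy ▸ (h' y (hy.resolve_left h2)).1))
    · exact absurd (h y h2).1 (fun hh => (Finset.disjoint_left.1 hC hh) (hxy ▸ (h' x (hx.resolve_left h1)).1))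
    · exact he' (hx.resolve_left h1) (hy.resolve_left h2) hxy
  · intro b hb
    by_cases h1 : b ∈ R
    · simp only [h1, if_true]; exact ⟨mem_union_left _ (h b h1).1, (h b h1).2⟩
    · simp only [h1, if_false]
      have := h' b ((mem_union.1 hb).resolve_left h1)
      exact ⟨mem_union_right _ this.1, this.2⟩

theorem PM.single {P : B → A → Prop} {b : B} {a : A} (h : P b a) : PM P {b} {a} :=
  ⟨fun _ => a, by simp, by simpa using h⟩

theorem PM.cons {P : B → A → Prop} {R : Finset B} {C : Finset A} {b : B} {a : A}
    (hb : b ∈ R) (ha : a ∈ C) (hP : P b a) (h : PM P (R.erase b) (C.erase a)) : PM P R C := by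
  have := (PM.single hP).glue h (by simp) (by simp)
  rwa [← insert_eq, ← insert_eq, insert_erase hb, insert_erase ha] at this

theorem PM.split {P : B → A → Prop} {R S : Finset B} {C T : Finset A} (hS : S ⊆ R) (hT : T ⊆ C)
    (h : PM P S T) (h' : PM P (R \ S) (C \ T)) : PM P R C := by
  have := h.glue h' disjoint_sdiff disjoint_sdiff
  rwa [union_sdiff_of_subset hS, union_sdiff_of_subset hT] at this

theorem hall {P : B → A → Prop} {R : Finset B} {C : Finset A} (hA : Nonempty A)
    (h : ∀ X ⊆ R, X.card ≤ (nb P C X).card) : PM P R C := by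
  have key := (Finset.all_card_le_biUnion_card_iff_exists_injective
    (fun b : R => C.filter (fun a => P b a))).1 (by
      intro s
      have h1 := h (s.map (Function.Embedding.subtype _)) (by
        intro x hx; simp at hx; exact hx.1)
      rw [card_map] at h1
      refine h1.trans (le_of_eq ?_)
      congr 1
      ext a
      simp only [mem_nb, mem_biUnion, mem_filter, mem_map, Function.Embedding.subtype_apply]
      constructor
      · rintro ⟨ha, b, ⟨b', hb', rfl⟩, hP⟩; exact ⟨b', hb', ha, hP⟩
      · rintro ⟨b, hb, ha, hP⟩; exact ⟨ha, b, ⟨b, hb, rfl⟩, hP⟩)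
  obtain ⟨f, hf, hf2⟩ := key
  obtain ⟨a⟩ := hA
  refine ⟨fun b => if hb : b ∈ R then f ⟨b, hb⟩ else a, ?_, ?_⟩
  · intro x hx y hy hxy
    simp only [mem_coe] at hx hy
    simp only [hx, hy, dif_pos] at hxy
    have := hf hxy
    simpa using this
  · intro b hb
    simp only [hb, dif_pos]
    simpa using hf2 ⟨b, hb⟩

theorem PM.transpose {P : B → A → Prop} {R : Finset B} {C : Finset A} (hB : Nonempty B)
    (hc : R.card = C.card) (h : PM P R C) : PM (fun a b => P b a) C R := by
  obtain ⟨e, he, h⟩ := h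
  have hs : ∀ a ∈ C, ∃ b ∈ R, e b = a := by
    have : R.image e = C := by
      apply Finset.eq_of_subset_of_card_le
      · intro a ha
        obtain ⟨b, hb, rfl⟩ := mem_image.1 ha
        exact (h b hb).1
      · rw [card_image_of_injOn he, hc]
    intro a ha
    rw [← this] at ha
    exact mem_image.1 ha
  obtain ⟨b0⟩ := hB
  refine ⟨fun a => if ha : a ∈ C then (hs a ha).choose else b0, ?_, ?_⟩
  · intro x hx y hy hxy
    simp only [mem_coe] at hx hy
    simp only [hx, hy, dif_pos] at hxy
    rw [← (hs x hx).choose_spec.2, hxy, (hs y hy).choose_spec.2]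
  · intro a ha
    simp only [ha, dif_pos]
    refine ⟨(hs a ha).choose_spec.1, ?_⟩
    have h1 := (h _ (hs a ha).choose_spec.1).2
    rwa [(hs a ha).choose_spec.2] at h1

/-- the linear map of a matrix block -/
noncomputable def bl (M : B → A → ℝ) (R : Finset B) (C : Finset A) : (C → ℝ) →ₗ[ℝ] (R → ℝ) where
  toFun v := fun b => ∑ a : C, M b a * v a
  map_add' v v' := by ext b; simp [mul_add, sum_add_distrib]
  map_smul' c v := by
    ext b; simp only [Pi.smul_apply, smul_eq_mul, RingHom.id_apply, mul_sum]
    exact sum_congr rfl (fun a _ => by ring)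

theorem bl_ext (M : B → A → ℝ) (R : Finset B) (C : Finset A) (v : A → ℝ) (b : R) :
    bl M R C (fun a : C => v a) b = ∑ a ∈ C, M b a * v a := by
  simp only [bl, LinearMap.coe_mk, AddHom.coe_mk]
  exact Finset.sum_coe_sort C (fun a => M b a * v a)

theorem ext_fun (C : Finset A) (v : C → ℝ) : ∃ v' : A → ℝ, v = fun a : C => v' a :=
  ⟨fun a => if h : a ∈ C then v ⟨a, h⟩ else 0, by ext a; simp⟩

theorem LA1 (M : B → A → ℝ) {R : Finset B} {C : Finset A} (h : R.card < C.card) :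
    ∃ v : A → ℝ, (∃ a ∈ C, v a ≠ 0) ∧ ∀ b ∈ R, ∑ a ∈ C, M b a * v a = 0 := by
  have h1 : LinearMap.ker (bl M R C) ≠ ⊥ := by
    apply LinearMap.ker_ne_bot_of_finrank_lt
    simpa using h
  obtain ⟨v, hv, hv0⟩ := Submodule.exists_mem_ne_zero_of_ne_bot h1
  obtain ⟨v', rfl⟩ := ext_fun C v
  refine ⟨v', ?_, ?_⟩
  · by_contra hcon
    push Not at hcon
    exact hv0 (by ext a; exact hcon a a.2)
  · intro b hb
    have := congrFun (LinearMap.mem_ker.1 hv) ⟨b, hb⟩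
    rwa [bl_ext] at this

theorem LA2 (M : B → A → ℝ) {R : Finset B} {C : Finset A} (h : R.card = C.card)
    (hk : ∀ v : A → ℝ, (∀ b ∈ R, ∑ a ∈ C, M b a * v a = 0) → ∀ a ∈ C, v a = 0) (g : B → ℝ) :
    ∃ v : A → ℝ, ∀ b ∈ R, ∑ a ∈ C, M b a * v a = g b := by
  have hinj : Function.Injective (bl M R C) := by
    rw [← LinearMap.ker_eq_bot, LinearMap.ker_eq_bot']
    intro v hv
    obtain ⟨v', rfl⟩ := ext_fun C v
    ext a
    refine hk v' (fun b hb => ?_) a a.2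
    rw [← bl_ext M R C v' ⟨b, hb⟩, hv]; rfl
  have hsur := (LinearMap.injective_iff_surjective_of_finrank_eq_finrank (by simp [h])).1 hinj
  obtain ⟨v, hv⟩ := hsur (fun b => g b)
  obtain ⟨v', rfl⟩ := ext_fun C v
  refine ⟨v', fun b hb => ?_⟩
  rw [← bl_ext M R C v' ⟨b, hb⟩, hv]

theorem LA3 (M : B → A → ℝ) {R : Finset B} {C : Finset A} (h : R.card = C.card)
    (hk : ∀ v : A → ℝ, (∀ b ∈ R, ∑ a ∈ C, M b a * v a = 0) → ∀ a ∈ C, v a = 0)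
    (μ : B → ℝ) (hμ : ∀ a ∈ C, ∑ b ∈ R, M b a * μ b = 0) : ∀ b ∈ R, μ b = 0 := by
  intro b1 hb1
  obtain ⟨v, hv⟩ := LA2 M h hk (fun b => if b = b1 then 1 else 0)
  have h1 : ∑ b ∈ R, μ b * (∑ a ∈ C, M b a * v a) = μ b1 := by
    rw [sum_congr rfl (fun b hb => by rw [hv b hb])]
    simp [hb1]
  have h2 : ∑ b ∈ R, μ b * (∑ a ∈ C, M b a * v a) = ∑ a ∈ C, v a * ∑ b ∈ R, M b a * μ b := by
    simp only [mul_sum]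
    rw [sum_comm]
    exact sum_congr rfl (fun a _ => sum_congr rfl (fun b _ => by ring))
  rw [← h1, h2]
  exact sum_eq_zero (fun a ha => by rw [hμ a ha, mul_zero])

theorem Pf.transpose {s : B → A → ℝ} {R : Finset B} {C : Finset A} (hA : Nonempty A)
    (hc : R.card = C.card) (h : Pf s R C) : Pf (fun a b => s b a) C R := by
  intro w hw hPM μ hμ
  have h1 := h (fun b a => w a b) (fun b a => hw a b) (hPM.transpose hA hc.symm)
  exact LA3 (fun b a => w a b * s b a) hc h1 μ hμ

theorem compl_sub {P : B → A → Prop} {R : Finset B} {C X : Finset A} :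
    nb P C (R \ nb (fun a b => P b a) R X) ⊆ C \ X := by
  intro a ha
  obtain ⟨ha, b, hb, hP⟩ := mem_nb.1 ha
  rw [mem_sdiff] at hb ⊢
  exact ⟨ha, fun hX => hb.2 (mem_nb.2 ⟨hb.1, a, hX, hP⟩)⟩

theorem Elem.transpose {P : B → A → Prop} {R : Finset B} {C : Finset A}
    (h : Elem P R C) : Elem (fun a b => P b a) C R := by
  refine ⟨h.1.symm, fun X hX hne hlt => ?_⟩
  by_contra hcon
  have hs : nb (fun a b => P b a) R X ⊆ R := nb_sub _ _ _
  have h1 := card_sdiff_of_subset hs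
  have h2 := card_sdiff_of_subset hX
  have h3 := card_le_card hs
  have h4 := card_le_card (compl_sub (P := P) (R := R) (C := C) (X := X))
  have h5 := hne.card_pos
  have h6 := h.1
  by_cases h0 : nb (fun a b => P b a) R X = ∅
  · obtain ⟨b, hb⟩ : R.Nonempty := by rw [← card_pos]; omega
    have h7 : (R.erase b).card = R.card - 1 := card_erase_of_mem hb
    by_cases h9 : R.card = 1
    · omega
    have h8 := h.2 (R.erase b) (erase_subset _ _) (by rw [← card_pos]; omega) (by omega)
    have h10 : nb P C (R.erase b) ⊆ nb P C (R \ nb (fun a b => P b a) R X) := by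
      rw [h0, sdiff_empty]
      intro a ha
      obtain ⟨ha, b, hb, hP⟩ := mem_nb.1 ha
      exact mem_nb.2 ⟨ha, b, mem_of_mem_erase hb, hP⟩
    have := card_le_card h10
    omega
  · have h9 : 0 < (nb (fun a b => P b a) R X).card := card_pos.2 (nonempty_iff_ne_empty.2 h0)
    have h8 := h.2 _ (sdiff_subset (s := R) (t := nb (fun a b => P b a) R X))
      (by rw [← card_pos]; omega) (by omega)
    omega

theorem nb_mono (P : B → A → Prop) {C : Finset A} {S S' : Finset B} (h : S ⊆ S') :
    nb P C S ⊆ nb P C S' := by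
  intro a ha
  obtain ⟨ha, b, hb, hP⟩ := mem_nb.1 ha
  exact mem_nb.2 ⟨ha, b, h hb, hP⟩

theorem nb_union (P : B → A → Prop) {C : Finset A} {S S' : Finset B} :
    nb P C (S ∪ S') = nb P C S ∪ nb P C S' := by
  ext a; simp only [mem_nb, mem_union]; grind

theorem Elem.full {P : B → A → Prop} {R : Finset B} {C : Finset A}
    (h : Elem P R C) (h2 : 2 ≤ R.card) : nb P C R = C := by
  obtain ⟨b, hb⟩ : R.Nonempty := by rw [← card_pos]; omega
  have h7 : (R.erase b).card = R.card - 1 := card_erase_of_mem hb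
  have h8 := h.2 (R.erase b) (erase_subset _ _) (by rw [← card_pos]; omega) (by omega)
  apply Finset.eq_of_subset_of_card_le (nb_sub _ _ _)
  have := card_le_card (nb_mono P (C := C) (erase_subset b R))
  have := h.1
  omega

end TFH

namespace TFH
open Finset
open scoped Classical
set_option linter.all false
variable {A B : Type*}

theorem GSC {s : B → A → ℝ} {R S : Finset B} {C T : Finset A} (hPf : Pf s R C)
    (hS : S ⊆ R) (hT : T ⊆ C) (w : B → A → ℝ) (hw : ∀ b a, 0 ≤ w b a) (v : A → ℝ)
    (h0 : ∀ b ∈ R, ∑ a ∈ T, w b a * s b a * v a = 0) {c : B} {t : A} (hc : c ∈ R \ S) (ht : t ∈ T)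
    (hwc : w c t ≠ 0) (hsc : s c t ≠ 0)
    (pm1 : PM (fun b a => w b a ≠ 0 ∧ s b a ≠ 0) S (T.erase t))
    (pm2 : PM (pat s) ((R \ S).erase c) (C \ T)) : ∀ a ∈ T, v a = 0 := by
  have key := hPf (fun b a => if a ∈ T then w b a else 1)
    (fun b a => by split_ifs <;> [exact hw b a; norm_num]) ?_
    (fun a => if a ∈ T then v a else 0) ?_
  · intro a ha
    have := key a (hT ha)
    simpa [ha] using this
  · refine PM.cons (mem_sdiff.1 hc).1 (hT ht) (by simp [ht, hwc, hsc]) ?_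
    refine PM.split (S := S) (T := T.erase t) ?_ (erase_subset_erase _ hT) ?_ ?_
    · intro b hb; rw [mem_erase]; exact ⟨fun h => (mem_sdiff.1 hc).2 (h ▸ hb), hS hb⟩
    · refine pm1.mono (fun b hb a ha h => ?_) subset_rfl
      simp [mem_of_mem_erase ha, h]
    · have e1 : R.erase c \ S = (R \ S).erase c := by ext; grind
      have e2 : C.erase t \ T.erase t = C \ T := by ext; grind
      rw [e1, e2]
      refine pm2.mono (fun b hb a ha h => ?_) subset_rfl
      simp [(mem_sdiff.1 ha).2]; exact h
  · intro b hb
    refine Eq.trans (sum_subset hT ?_).symm (Eq.trans ?_ (h0 b hb))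
    · intro a _ ha; simp [ha]
    · exact sum_congr rfl (fun a ha => by simp [ha])

theorem GTC {s : B → A → ℝ} {R S : Finset B} {C T : Finset A} {b0 : B} {a0 : A} (hPf : Pf s R C)
    (hS : S ⊆ R) (hT : T ⊆ C) (hb0 : b0 ∈ S) (ha0 : a0 ∈ C) (ha0T : a0 ∉ T) (hs0 : s b0 a0 ≠ 0)
    (w : B → A → ℝ) (hw : ∀ b a, 0 ≤ w b a) (v : A → ℝ)
    (h0 : ∀ b ∈ R, ∑ a ∈ T, w b a * s b a * v a = if b = b0 then 1 else 0)
    {c c' : B} {t t' : A} (hc : c ∈ R \ S) (ht : t ∈ T) (hc' : c' ∈ R \ S) (ht' : t' ∈ T)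
    (hcc : c ≠ c') (htt : t ≠ t')
    (hwc : w c t ≠ 0) (hsc : s c t ≠ 0) (hwc' : w c' t' ≠ 0) (hsc' : s c' t' ≠ 0)
    (pm1 : PM (fun b a => w b a ≠ 0 ∧ s b a ≠ 0) (S.erase b0) ((T.erase t).erase t'))
    (pm2 : PM (pat s) (((R \ S).erase c).erase c') ((C \ T).erase a0)) : False := by
  have key := hPf (fun b a => if a ∈ T then w b a else if a = a0 then (if b = b0 then 1 else 0) else 1)
    (fun b a => by split_ifs <;> [exact hw b a; norm_num; norm_num; norm_num]) ?_
    (fun a => if a ∈ T then v a else if a = a0 then - (1 / s b0 a0) else 0) ?_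
  · have := key a0 ha0
    simp [ha0T, hs0] at this
  · rw [mem_sdiff] at hc hc'
    refine PM.cons (b := c) (a := t) (by grind) (by grind) (by simp [ht, hwc, hsc]) ?_
    refine PM.cons (b := c') (a := t') (by grind) (by grind) (by simp [ht', hwc', hsc']) ?_
    refine PM.cons (b := b0) (a := a0) (by grind) (by grind) (by simp [ha0T, hs0]) ?_
    refine PM.split (S := S.erase b0) (T := (T.erase t).erase t') (by grind) (by grind) ?_ ?_
    · refine pm1.mono (fun b hb a ha h => ?_) subset_rfl
      have : a ∈ T := by grind
      simp [this, h]
    · have e1 : ((R.erase c).erase c').erase b0 \ S.erase b0 = ((R \ S).erase c).erase c' := by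
        ext; grind
      have e2 : ((C.erase t).erase t').erase a0 \ (T.erase t).erase t' = (C \ T).erase a0 := by
        ext; grind
      rw [e1, e2]
      refine pm2.mono (fun b hb a ha h => ?_) subset_rfl
      have h1 : a ∉ T := by grind
      have h2 : a ≠ a0 := by grind
      simp [h1, h2]; exact h
  · intro b hb
    have hsub : insert a0 T ⊆ C := by grind
    rw [← sum_subset hsub]
    · rw [sum_insert ha0T]
      have : ∑ x ∈ T, (if x ∈ T then w b x else if x = a0 then if b = b0 then 1 else 0 else 1) * s b x *
          (if x ∈ T then v x else if x = a0 then - (1 / s b0 a0) else 0) = ∑ a ∈ T, w b a * s b a * v a :=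
        sum_congr rfl (fun a ha => by simp [ha])
      rw [this, h0 b hb]
      by_cases hbb : b = b0
      · subst hbb; simp [ha0T, hs0]
      · simp [ha0T, hbb]
    · intro a _ ha
      simp only [mem_insert, not_or] at ha
      simp [ha.1, ha.2]

end TFH

namespace TFH
open Finset
open scoped Classical
set_option linter.all false
variable {A B : Type*}

def Tight (P : B → A → Prop) (R : Finset B) (C : Finset A) (S : Finset B) : Prop :=
  S ⊆ R ∧ S.Nonempty ∧ S.card + 2 ≤ R.card ∧ (nb P C S).card = S.card + 1

theorem tight_H1 {P : B → A → Prop} {R S : Finset B} {C : Finset A} (hE : Elem P R C)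
    (hS : Tight P R C S) {t : A} (ht : t ∈ nb P C S) : PM P S ((nb P C S).erase t) := by
  apply hall ⟨t⟩
  intro X hX
  rcases X.eq_empty_or_nonempty with rfl | hne
  · simp
  have h1 := hE.2 X (hX.trans hS.1) hne (by have := card_le_card hX; have := hS.2.2.1; omega)
  have h2 : (nb P C X).erase t ⊆ nb P ((nb P C S).erase t) X := by
    intro a ha
    rw [mem_erase, mem_nb] at ha
    obtain ⟨h, ha, b, hb, hP⟩ := ha
    exact mem_nb.2 ⟨mem_erase.2 ⟨h, mem_nb.2 ⟨ha, b, hX hb, hP⟩⟩, b, hb, hP⟩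
  have h3 := card_le_card h2
  have h4 := pred_card_le_card_erase (s := nb P C X) (a := t)
  omega

theorem tight_H2 {P : B → A → Prop} {R S : Finset B} {C : Finset A} (hE : Elem P R C)
    (hA : Nonempty A)
    (hS : Tight P R C S) {c : B} (hc : c ∈ R \ S) : PM P ((R \ S).erase c) (C \ nb P C S) := by
  apply hall hA
  intro X hX
  rcases X.eq_empty_or_nonempty with rfl | hne
  · simp
  have hd : Disjoint S X := by
    rw [Finset.disjoint_left]; intro b hb hb2; have := hX hb2; grind
  have h0 : S ∪ X ⊆ R.erase c := by have := hS.1; grind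
  have h00 := card_le_card h0
  have h5 : (R.erase c).card = R.card - 1 := card_erase_of_mem (mem_sdiff.1 hc).1
  have h6 : 0 < R.card := card_pos.2 ⟨c, (mem_sdiff.1 hc).1⟩
  have h1 := hE.2 (S ∪ X) (h0.trans (erase_subset _ _)) (hne.mono subset_union_right) (by omega)
  rw [card_union_of_disjoint hd] at h1
  have h2 : nb P C (S ∪ X) \ nb P C S ⊆ nb P (C \ nb P C S) X := by
    intro a ha
    rw [mem_sdiff, nb_union, mem_union] at ha
    obtain ⟨h, h'⟩ := ha
    obtain ⟨h1, h2⟩ := mem_nb.1 (h.resolve_left h')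
    exact mem_nb.2 ⟨mem_sdiff.2 ⟨h1, h'⟩, h2⟩
  have h3 := card_le_card h2
  have h4 := card_sdiff_of_subset (nb_mono P (C := C) (subset_union_left (s₁ := S) (s₂ := X)))
  have := hS.2.2.2
  omega

theorem tight_u {s : B → A → ℝ} {R S : Finset B} {C : Finset A} (hPf : Pf s R C)
    (hE : Elem (pat s) R C) (hS : Tight (pat s) R C S) :
    ∃ u : A → ℝ, (∀ b ∈ S, ∑ a ∈ nb (pat s) C S, s b a * u a = 0) ∧
      ∀ c ∈ R \ S, ∀ t ∈ nb (pat s) C S, s c t ≠ 0 → u t ≠ 0 := by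
  obtain ⟨u, ⟨a1, ha1, hu1⟩, hu⟩ := LA1 s (R := S) (C := nb (pat s) C S) (by have := hS.2.2.2; omega)
  refine ⟨u, hu, fun c hc t ht hsc h0 => hu1 ?_⟩
  refine GSC hPf hS.1 (nb_sub _ _ _) (fun b a => if b ∈ S then 1 else if b = c ∧ a = t then 1 else 0)
    (fun b a => by split_ifs <;> norm_num) u ?_ hc ht (by grind) hsc ?_ ?_ a1 ha1
  · intro b hb
    by_cases hbS : b ∈ S
    · simpa [hbS] using hu b hbS
    · apply sum_eq_zero
      intro a ha
      by_cases h : b = c ∧ a = t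
      · rw [h.2, h0, mul_zero]
      · simp [hbS, h]
  · refine (tight_H1 hE hS ht).mono (fun b hb a ha h => ?_) subset_rfl
    simp [hb]; exact h
  · exact tight_H2 hE ⟨t⟩ hS hc

theorem contract {s : B → A → ℝ} {R S : Finset B} {C : Finset A} (hPf : Pf s R C)
    (hE : Elem (pat s) R C) (hS : Tight (pat s) R C S) {t0 : A} (ht0 : t0 ∈ nb (pat s) C S) :
    ∃ s2 : B → A → ℝ, Pf s2 (R \ S) (insert t0 (C \ nb (pat s) C S)) ∧
      (∀ c ∈ R \ S, ∀ a ∈ C \ nb (pat s) C S, s2 c a = s c a) ∧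
      ∀ c ∈ R \ S, (s2 c t0 ≠ 0 ↔ ∃ t ∈ nb (pat s) C S, s c t ≠ 0) := by
  obtain ⟨u, hu, hu0⟩ := tight_u hPf hE hS
  set T := nb (pat s) C S with hT
  have hTC : T ⊆ C := nb_sub _ _ _
  have hτ : ∀ c : B, ∃ t ∈ T, (∃ t ∈ T, s c t ≠ 0) → s c t ≠ 0 := by
    intro c
    by_cases h : ∃ t ∈ T, s c t ≠ 0
    · obtain ⟨t, ht, h⟩ := h; exact ⟨t, ht, fun _ => h⟩
    · exact ⟨t0, ht0, fun h' => absurd h' h⟩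
  choose τ hτT hτ using hτ
  have hSz : ∀ b ∈ S, ∀ a ∈ C \ T, s b a = 0 := by
    intro b hb a ha
    by_contra h
    exact (mem_sdiff.1 ha).2 (mem_nb.2 ⟨(mem_sdiff.1 ha).1, b, hb, h⟩)
  refine ⟨fun c a => if a = t0 then s c (τ c) * u (τ c) else s c a, ?_, ?_, ?_⟩
  · intro w2 hw2 hPM v2 hv2
    obtain ⟨e, he, hPM⟩ := hPM
    have hcard : (R \ S).card = (insert t0 (C \ T)).card := by
      rw [card_insert_of_notMem (by grind), card_sdiff_of_subset hS.1, card_sdiff_of_subset hTC]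
      have : T.card = S.card + 1 := hS.2.2.2
      have := hS.2.2.1; have := hE.1
      omega
    have hsur : (R \ S).image e = insert t0 (C \ T) := by
      apply Finset.eq_of_subset_of_card_le
      · intro a ha
        obtain ⟨b, hb, rfl⟩ := mem_image.1 ha
        exact (hPM b hb).1
      · rw [card_image_of_injOn he, hcard]
    obtain ⟨c, hc, hce⟩ := mem_image.1 (hsur ▸ mem_insert_self t0 (C \ T) : t0 ∈ (R \ S).image e)
    have hc2 := (hPM c hc).2
    rw [hce] at hc2
    simp only [if_true] at hc2
    have hcs : s c (τ c) ≠ 0 := left_ne_zero_of_mul hc2.2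
    have hcu : u (τ c) ≠ 0 := right_ne_zero_of_mul hc2.2
    have hcS : c ∉ S := (mem_sdiff.1 hc).2
    have key := hPf (fun b a => if b ∈ S then 1 else if a ∈ T then (if a = τ b then w2 b t0 else 0)
      else w2 b a) (fun b a => by
        split_ifs <;> [norm_num; exact hw2 _ _; norm_num; exact hw2 _ _]) ?_
      (fun a => if a ∈ T then v2 t0 * u a else v2 a) ?_
    · intro a ha
      rw [mem_insert] at ha
      rcases ha with rfl | ha
      · have := key (τ c) (hTC (hτT c))
        simp only [hτT c, if_true] at this
        exact (mul_eq_zero.1 this).resolve_right hcu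
      · have := key a (mem_sdiff.1 ha).1
        simpa [(mem_sdiff.1 ha).2] using this
    · refine PM.cons (b := c) (a := τ c) (mem_sdiff.1 hc).1 (hTC (hτT c))
        (by simp [hcS, hτT c, hc2.1, hcs]) ?_
      refine PM.split (S := S) (T := T.erase (τ c)) (by have := hS.1; grind) (by grind) ?_ ?_
      · refine (tight_H1 hE hS (hτT c)).mono (fun b hb a ha h => ?_) subset_rfl
        simp [hb]; exact h
      · have e1 : R.erase c \ S = (R \ S).erase c := by ext; grind
        have e2 : C.erase (τ c) \ T.erase (τ c) = C \ T := by ext; grind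
        rw [e1, e2]
        refine ⟨e, he.mono (by simp), ?_⟩
        intro b hb
        have hb' := mem_of_mem_erase hb
        have h1 := hPM b hb'
        have h2 : e b ≠ t0 := by
          intro h
          exact (mem_erase.1 hb).1 (he (by simpa using hb') (by simpa using hc) (by rw [h, hce]))
        have h3 : e b ∈ C \ T := (mem_insert.1 h1.1).resolve_left h2
        refine ⟨h3, ?_⟩
        have h4 := h1.2
        simp only [h2, if_false] at h4
        simpa [(mem_sdiff.1 hb').2, (mem_sdiff.1 h3).2] using h4
    · intro b hb
      rw [← sum_sdiff hTC]
      by_cases hbS : b ∈ S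
      · have h1 : ∀ x ∈ C \ T, (if b ∈ S then 1 else if x ∈ T then (if x = τ b then w2 b t0 else 0)
            else w2 b x) * s b x * (if x ∈ T then v2 t0 * u x else v2 x) = 0 := by
          intro x hx; rw [hSz b hbS x hx]; ring
        rw [sum_eq_zero h1, zero_add]
        have h2 : ∀ x ∈ T, (if b ∈ S then 1 else if x ∈ T then (if x = τ b then w2 b t0 else 0)
            else w2 b x) * s b x * (if x ∈ T then v2 t0 * u x else v2 x) = v2 t0 * (s b x * u x) := by
          intro x hx; simp only [hbS, hx, if_true]; ring
        rw [sum_congr rfl h2, ← mul_sum, hu b hbS, mul_zero]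
      · have hbR : b ∈ R \ S := mem_sdiff.2 ⟨hb, hbS⟩
        have h0 := hv2 b hbR
        rw [sum_insert (by grind)] at h0
        rw [add_comm]
        refine Eq.trans ?_ h0
        congr 1
        · rw [sum_eq_single (τ b)]
          · simp only [hbS, hτT b, if_true, if_false]; ring
          · intro x hx hne; simp [hbS, hx, hne]
          · intro h; exact absurd (hτT b) h
        · apply sum_congr rfl
          intro x hx
          have h1 : x ∉ T := (mem_sdiff.1 hx).2
          have h2 : x ≠ t0 := fun h => h1 (h ▸ ht0)
          simp [hbS, h1, h2]
  · intro c hc a ha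
    have h2 : a ≠ t0 := fun h => (mem_sdiff.1 ha).2 (h ▸ ht0)
    simp [h2]
  · intro c hc
    simp only [if_true]
    constructor
    · intro h; exact ⟨τ c, hτT c, left_ne_zero_of_mul h⟩
    · intro h
      exact mul_ne_zero (hτ c h) (hu0 c hc _ (hτT c) (hτ c h))

theorem tight_compl {P : B → A → Prop} {R S : Finset B} {C : Finset A} (hE : Elem P R C)
    (hS : Tight P R C S) : nb P C (R \ S) ⊇ C \ nb P C S := by
  intro a ha
  rw [mem_sdiff] at ha
  have h1 := hE.full (by have := hS.2.2.1; omega)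
  rw [← h1] at ha
  obtain ⟨b, hb, hP⟩ := (mem_nb.1 ha.1).2
  have haC := (mem_nb.1 ha.1).1
  refine mem_nb.2 ⟨haC, b, mem_sdiff.2 ⟨hb, fun hbS => ha.2 ?_⟩, hP⟩
  rw [h1]
  exact mem_nb.2 ⟨haC, b, hbS, hP⟩

theorem tight_trans {P : B → A → Prop} {R S : Finset B} {C : Finset A} (hE : Elem P R C)
    (hS : Tight P R C S) : nb (fun a b => P b a) R (C \ nb P C S) = R \ S ∧
      Tight (fun a b => P b a) C R (C \ nb P C S) := by
  have hTC := nb_sub P C S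
  obtain ⟨hSR, hne, hle, hT⟩ := hS
  have h1 := hE.1
  have h2 := card_sdiff_of_subset hTC
  have h3 := card_sdiff_of_subset hSR
  have hp := hne.card_pos
  have hne2 : (C \ nb P C S).Nonempty := by rw [← card_pos]; omega
  have h4 := hE.transpose.2 (C \ nb P C S) sdiff_subset hne2 (by omega)
  have h5 : nb (fun a b => P b a) R (C \ nb P C S) = R \ S := by
    apply Finset.eq_of_subset_of_card_le
    · intro b hb
      obtain ⟨hb, a, ha, hP⟩ := mem_nb.1 hb
      refine mem_sdiff.2 ⟨hb, fun hbS => (mem_sdiff.1 ha).2 (mem_nb.2 ⟨(mem_sdiff.1 ha).1, b, hbS, hP⟩)⟩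
    · omega
  refine ⟨h5, sdiff_subset, hne2, by omega, ?_⟩
  rw [h5]; omega

/-- transposed contraction -/
theorem contract_T {s : B → A → ℝ} {R S : Finset B} {C : Finset A} (hPf : Pf s R C)
    (hE : Elem (pat s) R C) (hS : Tight (pat s) R C S) {c0 : B} (hc0 : c0 ∈ R \ S) :
    ∃ s1 : B → A → ℝ, Pf s1 (insert c0 S) (nb (pat s) C S) ∧
      (∀ b ∈ S, ∀ a ∈ nb (pat s) C S, s1 b a = s b a) ∧
      ∀ a ∈ nb (pat s) C S, (s1 c0 a ≠ 0 ↔ ∃ c ∈ R \ S, s c a ≠ 0) := by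
  obtain ⟨a1, ha1⟩ : (nb (pat s) C S).Nonempty := by rw [← card_pos]; have := hS.2.2.2; omega
  obtain ⟨h5, hT⟩ := tight_trans hE hS
  have hp : (pat fun (a : A) (b : B) => s b a) = fun a b => pat s b a := rfl
  obtain ⟨s2, hs2, h2, h3⟩ := contract (s := fun a b => s b a) (hPf.transpose ⟨a1⟩ hE.1)
    hE.transpose hT (t0 := c0) (by rw [hp, h5]; exact hc0)
  rw [hp] at hs2 h2 h3
  simp only [h5, sdiff_sdiff_right_self, inf_eq_inter, inter_eq_right.2 (nb_sub (pat s) C S),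
    inter_eq_right.2 hS.1] at hs2 h2 h3
  refine ⟨fun b a => s2 a b, hs2.transpose ⟨c0⟩ ?_, fun b hb a ha => h2 a ha b hb, fun a ha => h3 a ha⟩
  rw [card_insert_of_notMem (mem_sdiff.1 hc0).2, hS.2.2.2]

end TFH

namespace TFH
open Finset
open scoped Classical
set_option linter.all false
variable {A B : Type*}

/-- delete one edge -/
noncomputable def del (s : B → A → ℝ) (b0 : B) (a0 : A) : B → A → ℝ :=
  fun b a => if b = b0 ∧ a = a0 then 0 else s b a

structure Ctx (s : B → A → ℝ) (R : Finset B) (C : Finset A) (b0 : B) (a0 : A) : Prop where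
  pf : Pf s R C
  br : Brace (pat s) R C
  card3 : 3 ≤ R.card
  hb0 : b0 ∈ R
  ha0 : a0 ∈ C
  hs : s b0 a0 ≠ 0

section
variable {s : B → A → ℝ} {R : Finset B} {C : Finset A} {b0 : B} {a0 : A}

theorem pat_del {b : B} {a : A} : pat (del s b0 a0) b a ↔ pat s b a ∧ ¬ (b = b0 ∧ a = a0) := by
  unfold pat del; split_ifs with h <;> simp [h]

theorem Pf.del (h : Pf s R C) : Pf (del s b0 a0) R C := by
  intro w hw hPM v hv
  refine h (fun b a => if b = b0 ∧ a = a0 then 0 else w b a)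
    (fun b a => by split_ifs <;> [norm_num; exact hw _ _]) ?_ v ?_
  · refine hPM.mono (fun b hb a ha h => ?_) subset_rfl
    have := pat_del.1 h.2
    simp only [this.2, if_false]
    exact ⟨h.1, this.1⟩
  · intro b hb
    refine Eq.trans ?_ (hv b hb)
    apply sum_congr rfl
    intro a ha
    unfold TFH.del
    split_ifs <;> simp

theorem nb_del_of_notMem {S : Finset B} (h : b0 ∉ S) :
    nb (pat (del s b0 a0)) C S = nb (pat s) C S := by
  ext a; simp only [mem_nb, pat_del]; grind

theorem nb_del_sup (S : Finset B) :
    (nb (pat s) C S).erase a0 ⊆ nb (pat (del s b0 a0)) C S := by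
  intro a; simp only [mem_erase, mem_nb, pat_del]; grind

theorem nb_del_le (S : Finset B) :
    nb (pat (del s b0 a0)) C S ⊆ nb (pat s) C S := by
  intro a; simp only [mem_nb, pat_del]; grind

theorem Ctx.elem0 (h : Ctx s R C b0 a0) : Elem (pat (del s b0 a0)) R C := by
  refine ⟨h.br.1, fun S hS hne hlt => ?_⟩
  have h3 := h.card3
  by_cases h2 : S.card + 2 ≤ R.card
  · have h1 := h.br.2 S hS hne h2
    have h4 := card_le_card (nb_del_sup (s := s) (C := C) (b0 := b0) (a0 := a0) S)
    have h5 := pred_card_le_card_erase (s := nb (pat s) C S) (a := a0)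
    omega
  · obtain ⟨b, hb, hb'⟩ : ∃ b ∈ S, b0 ∉ S.erase b := by
      by_cases hb0 : b0 ∈ S
      · exact ⟨b0, hb0, by simp⟩
      · obtain ⟨b, hb⟩ := hne
        exact ⟨b, hb, fun h => hb0 (mem_of_mem_erase h)⟩
    have h5 : (S.erase b).card = S.card - 1 := card_erase_of_mem hb
    have h1 := h.br.2 (S.erase b) ((erase_subset _ _).trans hS) (by rw [← card_pos]; omega) (by omega)
    rw [← nb_del_of_notMem (a0 := a0) hb'] at h1
    have h4 := card_le_card (nb_mono (pat (del s b0 a0)) (C := C) (erase_subset b S))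
    omega

theorem Ctx.tight_b0 (h : Ctx s R C b0 a0) {S : Finset B} (hS : Tight (pat (del s b0 a0)) R C S) :
    b0 ∈ S := by
  by_contra hb
  have h1 := h.br.2 S hS.1 hS.2.1 hS.2.2.1
  rw [← nb_del_of_notMem (a0 := a0) hb, hS.2.2.2] at h1
  omega

theorem Ctx.tight_a0 (h : Ctx s R C b0 a0) {S : Finset B} (hS : Tight (pat (del s b0 a0)) R C S) :
    a0 ∉ nb (pat (del s b0 a0)) C S := by
  intro ha
  have h1 := h.br.2 S hS.1 hS.2.1 hS.2.2.1
  have h2 : nb (pat s) C S ⊆ nb (pat (del s b0 a0)) C S := by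
    intro a h'
    by_cases haa : a = a0
    · rw [haa]; exact ha
    · exact nb_del_sup S (mem_erase.2 ⟨haa, h'⟩)
  have h3 := card_le_card h2
  have := hS.2.2.2
  omega

theorem Ctx.H3 (h : Ctx s R C b0 a0) {S : Finset B} (hS : Tight (pat (del s b0 a0)) R C S)
    {t t' : A} : PM (pat s) (S.erase b0) (((nb (pat (del s b0 a0)) C S).erase t).erase t') := by
  apply hall ⟨t⟩
  intro X hX
  rcases X.eq_empty_or_nonempty with rfl | hne
  · simp
  have hXS : X ⊆ S := hX.trans (erase_subset _ _)
  have h1 := h.br.2 X (hXS.trans hS.1) hne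
    (by have := card_le_card hXS; have := hS.2.2.1; omega)
  have hb : b0 ∉ X := fun hb => by simpa using hX hb
  have h2 : ((nb (pat s) C X).erase t).erase t' ⊆
      nb (pat s) (((nb (pat (del s b0 a0)) C S).erase t).erase t') X := by
    intro a ha
    have ha2 : a ∈ nb (pat (del s b0 a0)) C X := by
      rw [nb_del_of_notMem hb]; exact mem_of_mem_erase (mem_of_mem_erase ha)
    have ha3 := nb_mono _ hXS ha2
    have ha4 := mem_nb.1 (mem_of_mem_erase (mem_of_mem_erase ha))
    refine mem_nb.2 ⟨?_, ha4.2⟩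
    simp only [mem_erase] at ha ⊢
    exact ⟨ha.1, ha.2.1, ha3⟩
  have h3 := card_le_card h2
  have h4 := pred_card_le_card_erase (s := nb (pat s) C X) (a := t)
  have h5 := pred_card_le_card_erase (s := (nb (pat s) C X).erase t) (a := t')
  omega

theorem Ctx.H4 (h : Ctx s R C b0 a0) {S : Finset B} (hS : Tight (pat (del s b0 a0)) R C S)
    {c c' : B} (hc : c ∈ R \ S) (hc' : c' ∈ R \ S) (hcc : c ≠ c') :
    PM (pat s) (((R \ S).erase c).erase c') ((C \ nb (pat (del s b0 a0)) C S).erase a0) := by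
  apply hall ⟨a0⟩
  intro X hX
  rcases X.eq_empty_or_nonempty with rfl | hne
  · simp
  have hd : Disjoint S X := by
    rw [Finset.disjoint_left]; intro b hb hb2; have := hX hb2; grind
  have h0 : S ∪ X ⊆ (R.erase c).erase c' := by have := hS.1; grind
  have h00 := card_le_card h0
  rw [mem_sdiff] at hc hc'
  have h5 : (R.erase c).card = R.card - 1 := card_erase_of_mem hc.1
  have h5' : ((R.erase c).erase c').card = (R.erase c).card - 1 := card_erase_of_mem (by grind)
  have := h.card3
  have h1 := h.br.2 (S ∪ X) (h0.trans ((erase_subset _ _).trans (erase_subset _ _)))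
    (hne.mono subset_union_right) (by omega)
  rw [card_union_of_disjoint hd] at h1
  have h2 : (nb (pat s) C (S ∪ X) \ nb (pat (del s b0 a0)) C S).erase a0 ⊆
      nb (pat s) ((C \ nb (pat (del s b0 a0)) C S).erase a0) X := by
    intro a ha
    rw [mem_erase, mem_sdiff, nb_union, mem_union] at ha
    obtain ⟨hne, h, h'⟩ := ha
    have h6 : a ∉ nb (pat s) C S := fun h7 => h' (nb_del_sup S (mem_erase.2 ⟨hne, h7⟩))
    obtain ⟨h1, h2⟩ := mem_nb.1 (h.resolve_left h6)
    exact mem_nb.2 ⟨mem_erase.2 ⟨hne, mem_sdiff.2 ⟨h1, h'⟩⟩, h2⟩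
  have h3 := card_le_card h2
  have h4 := card_sdiff_of_subset ((nb_del_le (s := s) (C := C) (b0 := b0) (a0 := a0) S).trans
    (nb_mono (pat s) (C := C) (subset_union_left (s₁ := S) (s₂ := X))))
  have h6 := pred_card_le_card_erase (s := (nb (pat s) C (S ∪ X) \ nb (pat (del s b0 a0)) C S)) (a := a0)
  have := hS.2.2.2
  omega

structure Cut (s : B → A → ℝ) (R : Finset B) (C : Finset A) (b0 : B) (a0 : A) (S : Finset B)
    (T : Finset A) (u x : A → ℝ) : Prop where
  pf : Pf s R C
  hS : S ⊆ R
  hT : T ⊆ C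
  hb0 : b0 ∈ S
  ha0 : a0 ∈ C
  ha0T : a0 ∉ T
  hs0 : s b0 a0 ≠ 0
  hu : ∀ b ∈ S, ∑ a ∈ T, s b a * u a = 0
  hx : ∀ b ∈ S, ∑ a ∈ T, s b a * x a = if b = b0 then 1 else 0
  hne : ∀ c ∈ R \ S, ∀ t ∈ T, s c t ≠ 0 → u t ≠ 0
  H1 : ∀ t ∈ T, PM (pat s) S (T.erase t)
  H2 : ∀ c ∈ R \ S, PM (pat s) ((R \ S).erase c) (C \ T)
  H3 : ∀ t t' : A, PM (pat s) (S.erase b0) ((T.erase t).erase t')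
  H4 : ∀ c ∈ R \ S, ∀ c' ∈ R \ S, c ≠ c' → PM (pat s) (((R \ S).erase c).erase c') ((C \ T).erase a0)

theorem del_T {S : Finset B} (h : Ctx s R C b0 a0) (hS : Tight (pat (del s b0 a0)) R C S) {b : B}
    {a : A} (ha : a ∈ nb (pat (del s b0 a0)) C S) : del s b0 a0 b a = s b a := by
  have h1 := h.tight_a0 hS
  unfold del
  rw [if_neg]
  rintro ⟨_, rfl⟩
  exact h1 ha

/-- the cut is crossed -/
theorem tight_cross {P : B → A → Prop} {S : Finset B} (hE : Elem P R C) (hS : Tight P R C S) :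
    ∃ c ∈ R \ S, ∃ t ∈ nb P C S, P c t := by
  have h1 := card_sdiff_of_subset hS.1
  obtain ⟨h2, h3, h4, h5⟩ := hS
  have h6 := h3.card_pos
  have h7 := hE.2 (R \ S) sdiff_subset (by rw [← card_pos]; omega) (by omega)
  by_contra hcon
  push Not at hcon
  have h8 : nb P C (R \ S) ⊆ C \ nb P C S := by
    intro a ha
    obtain ⟨ha, c, hc, hP⟩ := mem_nb.1 ha
    exact mem_sdiff.2 ⟨ha, fun h => hcon c hc a h hP⟩
  have h9 := card_le_card h8
  rw [card_sdiff_of_subset (nb_sub _ _ _)] at h9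
  have := hE.1
  omega

theorem Ctx.cut (h : Ctx s R C b0 a0) {S : Finset B} (hS : Tight (pat (del s b0 a0)) R C S) :
    ∃ u x : A → ℝ, Cut s R C b0 a0 S (nb (pat (del s b0 a0)) C S) u x := by
  have hE := h.elem0
  have hpf0 : Pf (del s b0 a0) R C := h.pf.del
  have hb0 := h.tight_b0 hS
  have ha0 := h.tight_a0 hS
  obtain ⟨u, hu, hne⟩ := tight_u hpf0 hE hS
  obtain ⟨c1, hc1, t1, ht1, hP1⟩ := tight_cross hE hS
  have hdel : ∀ b, ∀ a ∈ nb (pat (del s b0 a0)) C S, del s b0 a0 b a = s b a :=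
    fun b a ha => del_T h hS ha
  have hT := nb_sub (pat (del s b0 a0)) C S
  have hH1 : ∀ t ∈ nb (pat (del s b0 a0)) C S, PM (pat s) S ((nb (pat (del s b0 a0)) C S).erase t) :=
    fun t ht => (tight_H1 hE hS ht).mono (fun b hb a ha h => (pat_del.1 h).1) subset_rfl
  have hH2 : ∀ c ∈ R \ S, PM (pat s) ((R \ S).erase c) (C \ nb (pat (del s b0 a0)) C S) :=
    fun c hc => (tight_H2 hE ⟨a0⟩ hS hc).mono (fun b hb a ha h => (pat_del.1 h).1) subset_rfl
  have hu' : ∀ b ∈ S, ∑ a ∈ nb (pat (del s b0 a0)) C S, s b a * u a = 0 := by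
    intro b hb
    rw [← hu b hb]
    exact sum_congr rfl (fun a ha => by rw [hdel b a ha])
  set T := nb (pat (del s b0 a0)) C S with hTdef
  have hsc1 : s c1 t1 ≠ 0 := (pat_del.1 hP1).1
  obtain ⟨x, hx⟩ := LA2 s (R := S) (C := T.erase t1) (by
      rw [card_erase_of_mem ht1, hTdef, hS.2.2.2]; rfl) (by
      intro v hv a ha
      have := GSC h.pf hS.1 hT (fun b a => if b ∈ S then 1 else if b = c1 ∧ a = t1 then 1 else 0)
        (fun b a => by split_ifs <;> norm_num) (fun a => if a = t1 then 0 else v a) ?_ hc1 ht1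
        (by grind) hsc1 ?_ (hH2 c1 hc1) a (mem_of_mem_erase ha)
      · simpa [(mem_erase.1 ha).1] using this
      · intro b hb
        by_cases hbS : b ∈ S
        · refine Eq.trans ?_ (hv b hbS)
          rw [← add_sum_erase T _ ht1]
          simp only [if_true, mul_zero, zero_add]
          exact sum_congr rfl (fun a ha => by simp [hbS, (mem_erase.1 ha).1])
        · apply sum_eq_zero
          intro a ha
          by_cases haa : a = t1 <;> simp [hbS, haa]
      · refine (hH1 t1 ht1).mono (fun b hb a ha h => ?_) subset_rfl
        simp [hb]; exact h) (fun b => if b = b0 then 1 else 0)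
  refine ⟨u, fun a => if a = t1 then 0 else x a, ?_⟩
  constructor
  · exact h.pf
  · exact hS.1
  · exact hT
  · exact hb0
  · exact h.ha0
  · exact ha0
  · exact h.hs
  · exact hu'
  · intro b hb
    refine Eq.trans ?_ (hx b hb)
    rw [← add_sum_erase T _ ht1]
    simp only [if_true, mul_zero, zero_add]
    exact sum_congr rfl (fun a ha => by simp [(mem_erase.1 ha).1])
  · intro c hc t ht hst
    exact hne c hc t ht (by rw [hdel c t ht]; exact hst)
  · exact hH1
  · exact hH2
  · intro t t'; exact h.H3 hS
  · intro c hc c' hc' hcc; exact h.H4 hS hc hc' hcc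

end
end TFH

namespace TFH
open Finset
open scoped Classical
set_option linter.all false
variable {A B : Type*}

section
variable {s : B → A → ℝ} {R S : Finset B} {C T : Finset A} {b0 : B} {a0 : A} {u x : A → ℝ}

theorem sum_two {T : Finset A} {t t2 : A} (ht : t ∈ T) (ht2 : t2 ∈ T) (hne : t ≠ t2) (p q : ℝ)
    (f g : A → ℝ) : ∑ a ∈ T, (if a = t then p else if a = t2 then q else 0) * f a * g a =
      p * f t * g t + q * f t2 * g t2 := by
  rw [← add_sum_erase T _ ht, ← add_sum_erase (T.erase t) _ (mem_erase.2 ⟨hne.symm, ht2⟩)]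
  rw [sum_eq_zero]
  · simp [hne.symm]
  · intro a ha
    simp only [mem_erase] at ha
    simp [ha.1, ha.2.1]

theorem opp {α β : ℝ} (h : α * β < 0) : |β| * α + |α| * β = 0 ∧ 0 < |α| ∧ 0 < |β| := by
  rcases mul_neg_iff.1 h with h | h
  · rw [abs_of_pos h.1, abs_of_neg h.2]
    exact ⟨by ring, h.1, by linarith [h.2]⟩
  · rw [abs_of_pos h.2, abs_of_neg h.1]
    exact ⟨by ring, by linarith [h.1], h.2⟩

theorem Cut.single (h : Cut s R C b0 a0 S T u x) (wc : B → A → ℝ) (hw : ∀ b a, 0 ≤ wc b a)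
    (h0 : ∀ c ∈ R \ S, ∑ a ∈ T, wc c a * s c a * u a = 0) {c : B} {t : A} (hc : c ∈ R \ S)
    (ht : t ∈ T) (hwc : wc c t ≠ 0) (hs : s c t ≠ 0) : False := by
  refine h.hne c hc t ht hs ?_
  refine GSC h.pf h.hS h.hT (fun b a => if b ∈ S then 1 else wc b a)
    (fun b a => by split_ifs <;> [norm_num; exact hw _ _]) u ?_ hc ht ?_ hs ?_ (h.H2 c hc) t ht
  · intro b hb
    by_cases hbS : b ∈ S
    · simpa [hbS] using h.hu b hbS
    · simpa [hbS] using h0 b (mem_sdiff.2 ⟨hb, hbS⟩)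
  · simpa [(mem_sdiff.1 hc).2] using hwc
  · refine (h.H1 t ht).mono (fun b hb a ha h => ?_) subset_rfl
    simp [hb]; exact h

theorem Cut.double (h : Cut s R C b0 a0 S T u x) (wc : B → A → ℝ) (hw : ∀ b a, 0 ≤ wc b a) (ζ : ℝ)
    (h0 : ∀ c ∈ R \ S, ∑ a ∈ T, wc c a * s c a * (x a - ζ * u a) = 0)
    {c c' : B} {t t' : A} (hc : c ∈ R \ S) (ht : t ∈ T) (hc' : c' ∈ R \ S) (ht' : t' ∈ T)
    (hcc : c ≠ c') (htt : t ≠ t')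
    (hwc : wc c t ≠ 0) (hsc : s c t ≠ 0) (hwc' : wc c' t' ≠ 0) (hsc' : s c' t' ≠ 0) : False := by
  refine GTC h.pf h.hS h.hT h.hb0 h.ha0 h.ha0T h.hs0 (fun b a => if b ∈ S then 1 else wc b a)
    (fun b a => by split_ifs <;> [norm_num; exact hw _ _]) (fun a => x a - ζ * u a) ?_ hc ht hc' ht'
    hcc htt ?_ hsc ?_ hsc' ?_ (h.H4 c hc c' hc' hcc)
  · intro b hb
    by_cases hbS : b ∈ S
    · have h1 := h.hu b hbS
      have h2 := h.hx b hbS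
      rw [← h2]
      simp only [hbS, if_true, one_mul]
      calc ∑ a ∈ T, s b a * (x a - ζ * u a) = ∑ a ∈ T, s b a * x a - ζ * ∑ a ∈ T, s b a * u a := by
            rw [mul_sum, ← sum_sub_distrib]; exact sum_congr rfl (fun a _ => by ring)
        _ = _ := by rw [h1]; ring
    · have : b ≠ b0 := fun hh => hbS (hh ▸ h.hb0)
      simpa [hbS, this] using h0 b (mem_sdiff.2 ⟨hb, hbS⟩)
  · simpa [(mem_sdiff.1 hc).2] using hwc
  · simpa [(mem_sdiff.1 hc').2] using hwc'
  · refine (h.H3 t t').mono (fun b hb a ha h => ?_) subset_rfl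
    simp [mem_of_mem_erase hb]; exact h

theorem Cut.F1 (h : Cut s R C b0 a0 S T u x) {c : B} {t t2 : A} (hc : c ∈ R \ S)
    (ht : t ∈ T) (ht2 : t2 ∈ T) (hs : s c t ≠ 0) (hs2 : s c t2 ≠ 0) :
    0 < (s c t * u t) * (s c t2 * u t2) := by
  have n1 := mul_ne_zero hs (h.hne c hc t ht hs)
  have n2 := mul_ne_zero hs2 (h.hne c hc t2 ht2 hs2)
  by_contra hcon
  have hlt : (s c t * u t) * (s c t2 * u t2) < 0 :=
    lt_of_le_of_ne (not_lt.1 hcon) (mul_ne_zero n1 n2)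
  obtain ⟨h1, h2, h3⟩ := opp hlt
  have hne : t ≠ t2 := by
    rintro rfl
    exact absurd hlt (not_lt.2 (mul_self_nonneg _))
  refine h.single (fun b a => if b = c then (if a = t then |s c t2 * u t2| else if a = t2 then
    |s c t * u t| else 0) else 0) (fun b a => by split_ifs <;> first | exact abs_nonneg _ | exact le_rfl)
    ?_ hc ht ?_ hs
  · intro b hb
    by_cases hbc : b = c
    · subst hbc
      simp only [if_true]
      rw [sum_two ht ht2 hne]
      linarith
    · simp [hbc]
  · simpa using h3.ne'

theorem Cut.F2 (h : Cut s R C b0 a0 S T u x) {c c' : B} {t t' : A} (hc : c ∈ R \ S) (hc' : c' ∈ R \ S)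
    (ht : t ∈ T) (ht' : t' ∈ T) (hcc : c ≠ c') (htt : t ≠ t') (hs : s c t ≠ 0) (hs' : s c' t' ≠ 0) :
    x t / u t ≠ x t' / u t' := by
  intro heq
  have n1 := h.hne c hc t ht hs
  have n2 := h.hne c' hc' t' ht' hs'
  have e1 : x t - x t / u t * u t = 0 := by field_simp; ring
  have e2 : x t' - x t / u t * u t' = 0 := by rw [heq]; field_simp; ring
  refine h.double (fun b a => if (b = c ∧ a = t) ∨ (b = c' ∧ a = t') then 1 else 0)
    (fun b a => by split_ifs <;> norm_num) (x t / u t) ?_ hc ht hc' ht' hcc htt (by simp) hs (by simp) hs'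
  intro b hb
  apply sum_eq_zero
  intro a ha
  by_cases hh : (b = c ∧ a = t) ∨ (b = c' ∧ a = t')
  · rcases hh with hh | hh
    · rw [hh.2, e1, mul_zero]
    · rw [hh.2, e2, mul_zero]
  · simp [hh]

theorem Cut.F3 (h : Cut s R C b0 a0 S T u x) {c c' : B} {t t1 t2 : A} (hc : c ∈ R \ S) (hc' : c' ∈ R \ S)
    (ht : t ∈ T) (ht1 : t1 ∈ T) (ht2 : t2 ∈ T) (hcc : c ≠ c') (htt1 : t1 ≠ t) (htt2 : t2 ≠ t)
    (h1 : s c t ≠ 0) (h2 : s c t2 ≠ 0) (h3 : s c' t ≠ 0) (h4 : s c' t1 ≠ 0)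
    (hz1 : x t / u t ≤ x t1 / u t1) (hz2 : x t / u t ≤ x t2 / u t2) : False := by
  have g1 := lt_of_le_of_ne hz1 (h.F2 hc hc' ht ht1 hcc htt1.symm h1 h4)
  have g2 := lt_of_le_of_ne hz2 (h.F2 hc' hc ht ht2 hcc.symm htt2.symm h3 h2)
  obtain ⟨ζ, hζ1, hζ2⟩ : ∃ ζ, x t / u t < ζ ∧ ζ < min (x t1 / u t1) (x t2 / u t2) :=
    exists_between (lt_min g1 g2)
  have hζ3 := lt_of_lt_of_le hζ2 (min_le_left _ _)
  have hζ4 := lt_of_lt_of_le hζ2 (min_le_right _ _)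
  have n := h.hne c hc t ht h1
  have n1 := h.hne c' hc' t1 ht1 h4
  have n2 := h.hne c hc t2 ht2 h2
  have k1 := h.F1 hc ht ht2 h1 h2
  have k2 := h.F1 hc' ht ht1 h3 h4
  have e : x t - ζ * u t = u t * (x t / u t - ζ) := by field_simp
  have e1 : x t1 - ζ * u t1 = u t1 * (x t1 / u t1 - ζ) := by field_simp
  have e2 : x t2 - ζ * u t2 = u t2 * (x t2 / u t2 - ζ) := by field_simp
  have m1 : (s c t * (x t - ζ * u t)) * (s c t2 * (x t2 - ζ * u t2)) < 0 := by
    rw [e, e2]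
    have : (s c t * (u t * (x t / u t - ζ))) * (s c t2 * (u t2 * (x t2 / u t2 - ζ))) =
      ((s c t * u t) * (s c t2 * u t2)) * ((x t / u t - ζ) * (x t2 / u t2 - ζ)) := by ring
    rw [this]
    exact mul_neg_of_pos_of_neg k1 (mul_neg_of_neg_of_pos (by linarith) (by linarith))
  have m2 : (s c' t * (x t - ζ * u t)) * (s c' t1 * (x t1 - ζ * u t1)) < 0 := by
    rw [e, e1]
    have : (s c' t * (u t * (x t / u t - ζ))) * (s c' t1 * (u t1 * (x t1 / u t1 - ζ))) =
      ((s c' t * u t) * (s c' t1 * u t1)) * ((x t / u t - ζ) * (x t1 / u t1 - ζ)) := by ring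
    rw [this]
    exact mul_neg_of_pos_of_neg k2 (mul_neg_of_neg_of_pos (by linarith) (by linarith))
  obtain ⟨o1, p1, q1⟩ := opp m1
  obtain ⟨o2, p2, q2⟩ := opp m2
  refine h.double (fun b a =>
    if b = c then (if a = t then |s c t2 * (x t2 - ζ * u t2)| else if a = t2 then
      |s c t * (x t - ζ * u t)| else 0)
    else if b = c' then (if a = t then |s c' t1 * (x t1 - ζ * u t1)| else if a = t1 then
      |s c' t * (x t - ζ * u t)| else 0) else 0)
    (fun b a => by split_ifs <;> first | exact abs_nonneg _ | exact le_rfl) ζ ?_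
    hc ht hc' ht1 hcc htt1.symm ?_ h1 ?_ h4
  · intro b hb
    by_cases hbc : b = c
    · subst hbc
      simp only [if_true]
      rw [sum_two ht ht2 htt2.symm]
      linarith
    · by_cases hbc' : b = c'
      · subst hbc'
        simp only [if_true, hbc, if_false]
        rw [sum_two ht ht1 htt1.symm]
        linarith
      · simp [hbc, hbc']
  · simpa using q1.ne'
  · simpa [hcc.symm, htt1] using p2.ne'

end

theorem forest (P : B → A → Prop) (z : A → ℝ) (Q : Finset B) (n : ℕ) : ∀ (T : Finset A),
    T.card = n → T.Nonempty → (∀ t ∈ T, ∃ c ∈ Q, P c t) →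
    (∀ c ∈ Q, ∀ c' ∈ Q, ∀ t ∈ T, ∀ t1 ∈ T, ∀ t2 ∈ T, c ≠ c' → t1 ≠ t → t2 ≠ t → P c t → P c t2 →
      P c' t → P c' t1 → z t ≤ z t1 → z t ≤ z t2 → False) →
    ∑ t ∈ T, (Q.filter (fun c => P c t)).card + 1 ≤
      T.card + (Q.filter (fun c => ∃ t ∈ T, P c t)).card := by
  induction n with
  | zero => intro T hT hne; rw [card_eq_zero] at hT; simp [hT] at hne
  | succ n ih =>
    intro T hT hne hiso hF
    obtain ⟨t, ht, hmin⟩ := exists_min_image T z hne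
    rw [← add_sum_erase T _ ht]
    have hce : (T.erase t).card = n := by rw [card_erase_of_mem ht, hT]; rfl
    rcases (T.erase t).eq_empty_or_nonempty with h0 | hne'
    · rw [h0, sum_empty]
      have hT1 : T = {t} := by
        rw [← insert_erase ht, h0]; rfl
      subst hT1
      simp
    · have := ih (T.erase t) hce hne' (fun t' h' => hiso t' (mem_of_mem_erase h'))
        (fun c hc c' hc' t ht t1 ht1 t2 ht2 => hF c hc c' hc' t (mem_of_mem_erase ht) t1
          (mem_of_mem_erase ht1) t2 (mem_of_mem_erase ht2))
      have key : (Q.filter (fun c => P c t)).card + (Q.filter (fun c => ∃ t' ∈ T.erase t, P c t')).card ≤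
          (Q.filter (fun c => ∃ t' ∈ T, P c t')).card + 1 := by
        rw [← card_union_add_card_inter]
        apply add_le_add
        · apply card_le_card
          intro c hc
          simp only [mem_union, mem_filter] at hc ⊢
          rcases hc with ⟨hc, hP⟩ | ⟨hc, t', ht', hP⟩
          · exact ⟨hc, t, ht, hP⟩
          · exact ⟨hc, t', mem_of_mem_erase ht', hP⟩
        · rw [card_le_one]
          intro c hc c' hc'
          simp only [mem_inter, mem_filter] at hc hc'
          by_contra hcc
          obtain ⟨⟨hcQ, hP⟩, _, t2, ht2, hP2⟩ := hc
          obtain ⟨⟨hcQ', hP'⟩, _, t1, ht1, hP1⟩ := hc'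
          rw [mem_erase] at ht1 ht2
          exact hF c hcQ c' hcQ' t ht t1 ht1.2 t2 ht2.2 hcc ht1.1 ht2.1 hP hP2 hP' hP1
            (hmin t1 ht1.2) (hmin t2 ht2.2)
      omega

theorem ec_comm (P : B → A → Prop) (R : Finset B) (C : Finset A) :
    ec P R C = ∑ t ∈ C, (R.filter (fun b => P b t)).card := by
  unfold ec
  exact Finset.sum_card_bipartiteAbove_eq_sum_card_bipartiteBelow P

/-- columns of T seen from Q -/
theorem ec_nb (P : B → A → Prop) (R : Finset B) (C : Finset A) :
    ec P R C = ec P R (nb P C R) := by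
  unfold ec
  apply sum_congr rfl
  intro b hb
  congr 1
  ext a; simp only [mem_filter, mem_nb]; grind

theorem Cut.forest {s : B → A → ℝ} {R S : Finset B} {C T : Finset A} {b0 : B} {a0 : A} {u x : A → ℝ}
    (h : Cut s R C b0 a0 S T u x) {Q : Finset B} (hQ : Q ⊆ R \ S)
    (hne : (nb (pat s) T Q).Nonempty) :
    ec (pat s) Q T + 1 ≤ (nb (pat s) T Q).card + (Q.filter (fun c => ∃ t ∈ T, pat s c t)).card := by
  have hsub := nb_sub (pat s) T Q
  have := TFH.forest (pat s) (fun t => x t / u t) Q _ (nb (pat s) T Q) rfl hne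
    (fun t ht => (mem_nb.1 ht).2) (fun c hc c' hc' t ht t1 ht1 t2 ht2 hcc h1 h2 h3 h4 h5 h6 h7 h8 =>
      h.F3 (hQ hc) (hQ hc') (hsub ht) (hsub ht1) (hsub ht2) hcc h1 h2 h3 h4 h5 h6 h7 h8)
  rw [ec_nb, ec_comm]
  refine this.trans (le_of_eq ?_)
  congr 2
  ext c; simp only [mem_filter, mem_nb]; grind

end TFH

namespace TFH
open Finset
open scoped Classical
set_option linter.all false
variable {A B : Type*}

section
variable {s : B → A → ℝ} {R S S' : Finset B} {C T T' : Finset A} {b0 : B} {a0 : A}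
  {u x uS xS : A → ℝ}

/-- weights for the mid lemma -/
noncomputable def mw (S S' : Finset B) (T' : Finset A) (b1 b3 : B) (w1 w3 : A) (l1 l3 : ℝ)
    (wc : B → A → ℝ) : B → A → ℝ := fun b a =>
  if b ∈ S' then 1 else if b ∈ S then (if a ∈ T' then
    (if b = b1 ∧ a = w1 then l1 else 0) + (if b = b3 ∧ a = w3 then l3 else 0) else 1) else wc b a

theorem mw_nonneg {b1 b3 : B} {w1 w3 : A} {l1 l3 : ℝ} {wc : B → A → ℝ} (h1 : 0 ≤ l1) (h3 : 0 ≤ l3)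
    (hwc : ∀ b a, 0 ≤ wc b a) (b : B) (a : A) : 0 ≤ mw S S' T' b1 b3 w1 w3 l1 l3 wc b a := by
  unfold mw
  split_ifs <;> first | exact hwc _ _ | linarith

set_option maxHeartbeats 1000000 in
theorem mid_aux (hc : Cut s R C b0 a0 S T uS xS) (hc' : Cut s R C b0 a0 S' T' u x)
    (hSS : S' ⊆ S) (hTT : T' ⊆ T) (hz : ∀ b ∈ S', ∀ a ∈ T \ T', s b a = 0)
    (hcard : (S \ S').card = (T \ T').card)
    (pmh : PM (pat s) (S \ S') (T \ T'))
    (pmh2 : ∀ b ∈ S \ S', ∀ a ∈ T \ T', PM (pat s) ((S \ S').erase b) ((T \ T').erase a))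
    {b1 b3 c c2 : B} {w1 w2 w3 a : A} (hb1 : b1 ∈ S \ S') (hb3 : b3 ∈ S \ S')
    (hcR : c ∈ R \ S) (hc2R : c2 ∈ R \ S) (hcc2 : c ≠ c2) (ha : a ∈ T \ T')
    (hw1 : w1 ∈ T') (hw2 : w2 ∈ T') (hw3 : w3 ∈ T') (hs1 : s b1 w1 ≠ 0) (hs3 : s b3 w3 ≠ 0)
    (hs2 : s c2 w2 ≠ 0) (hsc : s c a ≠ 0)
    (hz12 : x w1 / u w1 < x w2 / u w2) (hz23 : x w2 / u w2 < x w3 / u w3) : False := by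
  have hSR := hc.hS
  have hSR' : ∀ b ∈ S \ S', b ∈ R \ S' := fun b hb => by
    rw [mem_sdiff] at hb ⊢; exact ⟨hSR hb.1, hb.2⟩
  have hw13 : w1 ≠ w3 := by rintro rfl; linarith
  have hw12 : w1 ≠ w2 := by rintro rfl; linarith
  have u1 : u w1 ≠ 0 := hc'.hne b1 (hSR' b1 hb1) w1 hw1 hs1
  have u3 : u w3 ≠ 0 := hc'.hne b3 (hSR' b3 hb3) w3 hw3 hs3
  have u2 : u w2 ≠ 0 := hc'.hne c2 (by rw [mem_sdiff] at hc2R ⊢; exact ⟨hc2R.1, fun h => hc2R.2 (hSS h)⟩)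
    w2 hw2 hs2
  -- invertibility
  have inv : ∀ y : A → ℝ, (∀ b ∈ S \ S', ∑ a ∈ T \ T', s b a * y a = 0) → ∀ a ∈ T \ T', y a = 0 := by
    intro y hy a' ha'
    have := GSC hc.pf hc.hS hc.hT (fun b a => if b ∈ S' then 1 else if b ∈ S then (if a ∈ T' then 0 else 1)
      else if b = c2 ∧ a = w2 then 1 else 0) (fun b a => by split_ifs <;> norm_num)
      (fun a => if a ∈ T' then 0 else y a) ?_ hc2R (hTT hw2) ?_ hs2 ?_ (hc.H2 c2 hc2R) a' (mem_sdiff.1 ha').1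
    · simpa [(mem_sdiff.1 ha').2] using this
    · intro b hb
      by_cases hbS' : b ∈ S'
      · apply sum_eq_zero
        intro a'' h''
        by_cases hT'' : a'' ∈ T'
        · simp [hT'']
        · rw [hz b hbS' a'' (mem_sdiff.2 ⟨h'', hT''⟩)]; ring
      · by_cases hbS : b ∈ S
        · refine Eq.trans ?_ (hy b (mem_sdiff.2 ⟨hbS, hbS'⟩))
          rw [← sum_sdiff hTT, add_comm, sum_eq_zero, zero_add]
          · apply sum_congr rfl
            intro a'' h''
            simp [hbS, hbS', (mem_sdiff.1 h'').2]
          · intro a'' h''; simp [h'']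
        · apply sum_eq_zero
          intro a'' h''
          by_cases hh : a'' = w2
          · simp [hh, hw2]
          · simp [hbS, hbS', hh]
    · have h1 := (mem_sdiff.1 hc2R).2
      have h2 : c2 ∉ S' := fun h => h1 (hSS h)
      simp [h1, h2]
    · refine PM.split (S := S') (T := T'.erase w2) hSS (by grind) ?_ ?_
      · refine (hc'.H1 w2 hw2).mono (fun b hb a ha h => ?_) subset_rfl
        simp [hb]; exact h
      · have e2 : T.erase w2 \ T'.erase w2 = T \ T' := by ext; grind
        rw [e2]
        refine pmh.mono (fun b hb a ha h => ?_) subset_rfl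
        rw [mem_sdiff] at hb ha
        simp [hb.1, hb.2, ha.2]; exact h
  obtain ⟨y1, hy1⟩ := LA2 s hcard inv (fun b => if b = b1 then - s b1 w1 else 0)
  obtain ⟨y3, hy3⟩ := LA2 s hcard inv (fun b => if b = b3 then - s b3 w3 else 0)
  -- assembled rows
  have rowh : ∀ (l1 l3 : ℝ) (wc : B → A → ℝ) (vT : A → ℝ), ∀ b ∈ S \ S',
      ∑ a ∈ T, mw S S' T' b1 b3 w1 w3 l1 l3 wc b a * s b a *
        (if a ∈ T' then vT a else l1 * vT w1 * y1 a + l3 * vT w3 * y3 a) = 0 := by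
    intro l1 l3 wc vT b hb
    have hbb := mem_sdiff.1 hb
    rw [← sum_sdiff hTT]
    have e1 : ∑ a ∈ T \ T', mw S S' T' b1 b3 w1 w3 l1 l3 wc b a * s b a *
        (if a ∈ T' then vT a else l1 * vT w1 * y1 a + l3 * vT w3 * y3 a) =
        l1 * vT w1 * (if b = b1 then - s b1 w1 else 0) + l3 * vT w3 * (if b = b3 then - s b3 w3 else 0) := by
      rw [← hy1 b hb, ← hy3 b hb, mul_sum, mul_sum, ← sum_add_distrib]
      apply sum_congr rfl
      intro a ha
      simp only [mw, hbb.1, hbb.2, (mem_sdiff.1 ha).2, if_true, if_false]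
      ring
    have e2 : ∑ a ∈ T', mw S S' T' b1 b3 w1 w3 l1 l3 wc b a * s b a *
        (if a ∈ T' then vT a else l1 * vT w1 * y1 a + l3 * vT w3 * y3 a) =
        (if b = b1 then l1 * s b1 w1 * vT w1 else 0) + (if b = b3 then l3 * s b3 w3 * vT w3 else 0) := by
      have e3 : ∀ a ∈ T', mw S S' T' b1 b3 w1 w3 l1 l3 wc b a * s b a *
        (if a ∈ T' then vT a else l1 * vT w1 * y1 a + l3 * vT w3 * y3 a) =
        (if a = w1 then (if b = b1 then l1 * s b1 w1 * vT w1 else 0) else 0) +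
        (if a = w3 then (if b = b3 then l3 * s b3 w3 * vT w3 else 0) else 0) := by
        intro a ha
        simp only [mw, hbb.1, hbb.2, ha, if_true, if_false]
        rw [add_mul, add_mul]
        congr 1
        · by_cases g1 : a = w1 <;> by_cases g3 : b = b1 <;> simp [g1, g3]
        · by_cases g1 : a = w3 <;> by_cases g3 : b = b3 <;> simp [g1, g3]
      rw [sum_congr rfl e3, sum_add_distrib, sum_ite_eq' T' w1, sum_ite_eq' T' w3]
      simp [hw1, hw3]
    rw [e1, e2]
    split_ifs <;> ring
  have rowS' : ∀ (l1 l3 : ℝ) (wc : B → A → ℝ) (vT vh : A → ℝ), ∀ b ∈ S',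
      ∑ a ∈ T, mw S S' T' b1 b3 w1 w3 l1 l3 wc b a * s b a *
        (if a ∈ T' then vT a else vh a) = ∑ a ∈ T', s b a * vT a := by
    intro l1 l3 wc vT vh b hb
    refine Eq.trans (sum_subset hTT ?_).symm ?_
    · intro a ha ha'
      rw [hz b hb a (mem_sdiff.2 ⟨ha, ha'⟩)]; ring
    · apply sum_congr rfl
      intro a ha
      simp [mw, hb, ha]
  have haT := (mem_sdiff.1 ha).1
  have haT' := (mem_sdiff.1 ha).2
  -- step 1
  have step1 : ∀ l1 l3 : ℝ, 0 ≤ l1 → 0 ≤ l3 → (l1 ≠ 0 ∨ l3 ≠ 0) →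
      l1 * u w1 * y1 a + l3 * u w3 * y3 a ≠ 0 := by
    intro l1 l3 h1 h3 hl hcon
    refine u1 ?_
    have := GSC hc.pf hc.hS hc.hT (mw S S' T' b1 b3 w1 w3 l1 l3 (fun b a' => if b = c ∧ a' = a then 1 else 0))
      (mw_nonneg h1 h3 (fun b a => by split_ifs <;> norm_num))
      (fun a => if a ∈ T' then u a else l1 * u w1 * y1 a + l3 * u w3 * y3 a) ?_ hcR haT ?_ hsc ?_
      (hc.H2 c hcR) w1 (hTT hw1)
    · simpa [hw1] using this
    · intro b hb
      by_cases hbS' : b ∈ S'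
      · rw [rowS' l1 l3 _ u _ b hbS']; exact hc'.hu b hbS'
      · by_cases hbS : b ∈ S
        · exact rowh l1 l3 _ u b (mem_sdiff.2 ⟨hbS, hbS'⟩)
        · apply sum_eq_zero
          intro a' h'
          by_cases hh : a' = a
          · subst hh; simp [haT', hcon]
          · simp [mw, hbS, hbS', hh]
    · have h1 := (mem_sdiff.1 hcR).2
      have h2 : c ∉ S' := fun h => h1 (hSS h)
      simp [mw, h1, h2]
    · have gen : ∀ (bi : B) (wi : A), bi ∈ S \ S' → wi ∈ T' → s bi wi ≠ 0 →
        mw S S' T' b1 b3 w1 w3 l1 l3 (fun b a' => if b = c ∧ a' = a then 1 else 0) bi wi ≠ 0 →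
        PM (fun b a' => mw S S' T' b1 b3 w1 w3 l1 l3 (fun b a' => if b = c ∧ a' = a then 1 else 0) b a' ≠ 0
          ∧ s b a' ≠ 0) S (T.erase a) := by
        intro bi wi hbi hwi hsi hmi
        refine PM.cons (b := bi) (a := wi) (mem_sdiff.1 hbi).1 (by grind) ⟨hmi, hsi⟩ ?_
        refine PM.split (S := S') (T := T'.erase wi) (by grind) (by grind) ?_ ?_
        · refine (hc'.H1 wi hwi).mono (fun b hb a ha h => ?_) subset_rfl
          simp [mw, hb]; exact h
        · have e1 : S.erase bi \ S' = (S \ S').erase bi := by ext; grind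
          have e2 : (T.erase a).erase wi \ T'.erase wi = (T \ T').erase a := by ext; grind
          rw [e1, e2]
          refine (pmh2 bi hbi a ha).mono (fun b hb a ha h => ?_) subset_rfl
          have hb' := mem_sdiff.1 (mem_of_mem_erase hb)
          have ha' := mem_sdiff.1 (mem_of_mem_erase ha)
          simp [mw, hb'.1, hb'.2, ha'.2]; exact h
      rw [mem_sdiff] at hb1 hb3
      rcases hl with hl | hl
      · refine gen b1 w1 (mem_sdiff.2 hb1) hw1 hs1 ?_
        simp [mw, hb1.1, hb1.2, hw1, hw13, hl]
      · refine gen b3 w3 (mem_sdiff.2 hb3) hw3 hs3 ?_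
        simp [mw, hb3.1, hb3.2, hw3, hw13.symm, hl]
  -- step 2
  set α := u w1 * y1 a with hα
  set β := u w3 * y3 a with hβ
  have step1' : ∀ l1 l3 : ℝ, 0 ≤ l1 → 0 ≤ l3 → (l1 ≠ 0 ∨ l3 ≠ 0) → l1 * α + l3 * β ≠ 0 := by
    intro l1 l3 h1 h3 hl h
    apply step1 l1 l3 h1 h3 hl
    rw [← h]; ring
  have hα0 : α ≠ 0 := by
    have := step1' 1 0 (by norm_num) le_rfl (by simp); simpa using this
  have hβ0 : β ≠ 0 := by
    have := step1' 0 1 le_rfl (by norm_num) (by simp); simpa using this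
  have hpos : 0 < α * β := by
    by_contra hcon
    have hlt : α * β < 0 := lt_of_le_of_ne (not_lt.1 hcon) (mul_ne_zero hα0 hβ0)
    obtain ⟨o, p, q⟩ := opp hlt
    exact step1' |β| |α| q.le p.le (Or.inl q.ne') o
  set ζ := x w2 / u w2 with hζ
  have e1 : x w1 - ζ * u w1 = u w1 * (x w1 / u w1 - ζ) := by field_simp
  have e3 : x w3 - ζ * u w3 = u w3 * (x w3 / u w3 - ζ) := by field_simp
  have e2 : x w2 - ζ * u w2 = 0 := by rw [hζ]; field_simp; ring
  have m : ((x w1 - ζ * u w1) * y1 a) * ((x w3 - ζ * u w3) * y3 a) < 0 := by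
    have : ((x w1 - ζ * u w1) * y1 a) * ((x w3 - ζ * u w3) * y3 a) =
      (α * β) * ((x w1 / u w1 - ζ) * (x w3 / u w3 - ζ)) := by rw [e1, e3, hα, hβ]; ring
    rw [this]
    exact mul_neg_of_pos_of_neg hpos (mul_neg_of_neg_of_pos (by linarith) (by linarith))
  obtain ⟨o, p, q⟩ := opp m
  set l1 := |(x w3 - ζ * u w3) * y3 a|
  set l3 := |(x w1 - ζ * u w1) * y1 a|
  refine GTC hc.pf hc.hS hc.hT hc.hb0 hc.ha0 hc.ha0T hc.hs0
    (mw S S' T' b1 b3 w1 w3 l1 l3 (fun b a' => if (b = c ∧ a' = a) ∨ (b = c2 ∧ a' = w2) then 1 else 0))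
    (mw_nonneg q.le p.le (fun b a => by split_ifs <;> norm_num))
    (fun a => if a ∈ T' then x a - ζ * u a else
      l1 * (x w1 - ζ * u w1) * y1 a + l3 * (x w3 - ζ * u w3) * y3 a) ?_
    hcR haT hc2R (hTT hw2) hcc2 (by rintro rfl; exact haT' hw2) ?_ hsc ?_ hs2 ?_
    (hc.H4 c hcR c2 hc2R hcc2)
  · intro b hb
    by_cases hbS' : b ∈ S'
    · rw [rowS' l1 l3 _ (fun a => x a - ζ * u a) _ b hbS', ← hc'.hx b hbS']
      calc ∑ a ∈ T', s b a * (x a - ζ * u a) = ∑ a ∈ T', s b a * x a - ζ * ∑ a ∈ T', s b a * u a := by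
            rw [mul_sum, ← sum_sub_distrib]; exact sum_congr rfl (fun a _ => by ring)
        _ = _ := by rw [hc'.hu b hbS']; ring
    · have hbb0 : b ≠ b0 := fun h => hbS' (h ▸ hc'.hb0)
      rw [if_neg hbb0]
      by_cases hbS : b ∈ S
      · exact rowh l1 l3 _ (fun a => x a - ζ * u a) b (mem_sdiff.2 ⟨hbS, hbS'⟩)
      · apply sum_eq_zero
        intro a' h'
        by_cases hh : a' = a
        · subst hh
          simp only [haT', if_false]
          have : l1 * (x w1 - ζ * u w1) * y1 a' + l3 * (x w3 - ζ * u w3) * y3 a' = 0 := by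
            rw [← o]; ring
          rw [this, mul_zero]
        · by_cases hh2 : a' = w2
          · subst hh2; simp [hw2, e2]
          · simp [mw, hbS, hbS', hh, hh2]
  · have h1 := (mem_sdiff.1 hcR).2
    have h2 : c ∉ S' := fun h => h1 (hSS h)
    simp [mw, h1, h2]
  · have h1 := (mem_sdiff.1 hc2R).2
    have h2 : c2 ∉ S' := fun h => h1 (hSS h)
    simp [mw, h1, h2]
  · have hb1' := mem_sdiff.1 hb1
    have hbb0 : b1 ≠ b0 := fun h => hb1'.2 (h ▸ hc'.hb0)
    have hb0' := hc'.hb0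
    refine PM.cons (b := b1) (a := w1) (mem_erase.2 ⟨hbb0, hb1'.1⟩) (by grind) ⟨?_, hs1⟩ ?_
    · simp [mw, hb1'.1, hb1'.2, hw1, hw13, q.ne']
    refine PM.split (S := S'.erase b0) (T := (T'.erase w1).erase w2) (by grind) (by grind) ?_ ?_
    · refine (hc'.H3 w1 w2).mono (fun b hb a ha h => ?_) subset_rfl
      simp [mw, mem_of_mem_erase hb]; exact h
    · have e1 : (S.erase b0).erase b1 \ S'.erase b0 = (S \ S').erase b1 := by ext; grind
      have e2 : ((T.erase a).erase w2).erase w1 \ (T'.erase w1).erase w2 = (T \ T').erase a := by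
        ext; grind
      rw [e1, e2]
      refine (pmh2 b1 hb1 a ha).mono (fun b hb a ha h => ?_) subset_rfl
      have hb' := mem_sdiff.1 (mem_of_mem_erase hb)
      have ha' := mem_sdiff.1 (mem_of_mem_erase ha)
      simp [mw, hb'.1, hb'.2, ha'.2]; exact h

end
end TFH

namespace TFH
open Finset
open scoped Classical
set_option linter.all false
variable {A B : Type*}

section
variable {s : B → A → ℝ} {R S S' : Finset B} {C : Finset A} {b0 : B} {a0 : A}

theorem not_tight_card {P : B → A → Prop} {R X : Finset B} {C : Finset A} (hE : Elem P R C)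
    (hX : X ⊆ R) (hne : X.Nonempty) (hle : X.card + 2 ≤ R.card) (h : ¬ Tight P R C X) :
    X.card + 2 ≤ (nb P C X).card := by
  have h1 := hE.2 X hX hne (by omega)
  have h2 : (nb P C X).card ≠ X.card + 1 := fun h2 => h ⟨hX, hne, hle, h2⟩
  omega

set_option maxHeartbeats 1000000 in
theorem Ctx.mid (h : Ctx s R C b0 a0) (hS : Tight (pat (del s b0 a0)) R C S)
    (hS' : Tight (pat (del s b0 a0)) R C S') (hss : S' ⊆ S)
    (hmax : ∀ X, S' ⊂ X → X ⊂ S → ¬ Tight (pat (del s b0 a0)) R C X) :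
    ((nb (pat (del s b0 a0)) C S').filter (fun w => (∃ b ∈ S \ S', s b w ≠ 0) ∧
      ∃ c ∈ R \ S, s c w ≠ 0)).card ≤ 2 := by
  by_contra hcon
  rw [not_le, two_lt_card] at hcon
  obtain ⟨w1, m1, w2, m2, w3, m3, n12, n13, n23⟩ := hcon
  have hE := h.elem0
  obtain ⟨uS, xS, hc⟩ := h.cut hS
  obtain ⟨u, x, hc'⟩ := h.cut hS'
  have hTT : nb (pat (del s b0 a0)) C S' ⊆ nb (pat (del s b0 a0)) C S := nb_mono _ hss
  have ha0T := h.tight_a0 hS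
  have hTC := nb_sub (pat (del s b0 a0)) C S
  have hTc : (nb (pat (del s b0 a0)) C S).card = S.card + 1 := hS.2.2.2
  have hTc' : (nb (pat (del s b0 a0)) C S').card = S'.card + 1 := hS'.2.2.2
  have hdel : ∀ (b : B) (a : A), a ≠ a0 → s b a ≠ 0 → pat (del s b0 a0) b a := fun b a ha hs =>
    pat_del.2 ⟨hs, fun hh => ha hh.2⟩
  set P0 := pat (del s b0 a0) with hP0
  set T := nb P0 C S with hT
  set T' := nb P0 C S' with hT'
  have hb0' := hc'.hb0
  have hz : ∀ b ∈ S', ∀ a ∈ T \ T', s b a = 0 := by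
    intro b hb a ha
    by_contra hne
    rw [mem_sdiff] at ha
    exact ha.2 (mem_nb.2 ⟨hTC ha.1, b, hb, hdel b a (fun h => ha0T (h ▸ ha.1)) hne⟩)
  have hcS := card_sdiff_of_subset hss
  have hcT := card_sdiff_of_subset hTT
  have hle := card_le_card hss
  have hcard : (S \ S').card = (T \ T').card := by omega
  have irr0 : ∀ X ⊆ S \ S', nb P0 C (S' ∪ X) \ T' ⊆ nb (pat s) (T \ T') X := by
    intro X hX a ha
    rw [mem_sdiff, nb_union, mem_union] at ha
    have h1 := ha.1.resolve_left ha.2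
    obtain ⟨h2, b, hb, hP⟩ := mem_nb.1 h1
    refine mem_nb.2 ⟨mem_sdiff.2 ⟨mem_nb.2 ⟨h2, b, (mem_sdiff.1 (hX hb)).1, hP⟩, ha.2⟩, b, hb, (pat_del.1 hP).1⟩
  have irr : ∀ X ⊆ S \ S', X.Nonempty → X ≠ S \ S' → X.card + 1 ≤ (nb (pat s) (T \ T') X).card := by
    intro X hX hne hXne
    have hd : Disjoint S' X := by
      rw [Finset.disjoint_left]; intro b hb hb2; have := hX hb2; grind
    have hcu := card_union_of_disjoint hd
    have hlt := card_lt_card (hX.ssubset_of_ne hXne)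
    have hsub : S' ∪ X ⊆ S := by grind
    have hpos := hne.card_pos
    have h1 := not_tight_card hE (X := S' ∪ X) (hsub.trans hS.1) (hne.mono subset_union_right)
      (by have := hS.2.2.1; omega) (hmax _ (by
        refine subset_union_left.ssubset_of_ne (fun hh => ?_)
        rw [← hh] at hcu; omega) (by
        refine hsub.ssubset_of_ne (fun hh => ?_)
        rw [hh] at hcu; omega))
    have h2 := card_le_card (irr0 X hX)
    rw [card_sdiff_of_subset (show T' ⊆ nb P0 C (S' ∪ X) from
      nb_mono P0 (C := C) (subset_union_left (s₁ := S') (s₂ := X)))] at h2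
    omega
  have irrF : (S \ S').card ≤ (nb (pat s) (T \ T') (S \ S')).card := by
    have h2 := card_le_card (irr0 (S \ S') subset_rfl)
    rw [union_sdiff_of_subset hss] at h2
    change (T \ T').card ≤ _ at h2
    omega
  have pmh : PM (pat s) (S \ S') (T \ T') := by
    apply hall ⟨a0⟩
    intro X hX
    rcases X.eq_empty_or_nonempty with rfl | hne
    · simp
    by_cases hXe : X = S \ S'
    · rw [hXe]; exact irrF
    · have := irr X hX hne hXe; omega
  have pmh2 : ∀ b ∈ S \ S', ∀ a ∈ T \ T', PM (pat s) ((S \ S').erase b) ((T \ T').erase a) := by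
    intro b hb a ha
    apply hall ⟨a0⟩
    intro X hX
    rcases X.eq_empty_or_nonempty with rfl | hne
    · simp
    have h1 := irr X (hX.trans (erase_subset _ _)) hne (by rintro rfl; simpa using hX hb)
    have h2 : (nb (pat s) (T \ T') X).erase a ⊆ nb (pat s) ((T \ T').erase a) X := by
      intro a'; simp only [mem_erase, mem_nb]; grind
    have h3 := card_le_card h2
    have h4 := pred_card_le_card_erase (s := nb (pat s) (T \ T') X) (a := a)
    omega
  have hB : ∀ b ∈ S \ S', b ∈ R \ S' := fun b hb => by
    rw [mem_sdiff] at hb ⊢; exact ⟨hS.1 hb.1, hb.2⟩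
  have hRS : ∀ c ∈ R \ S, c ∈ R \ S' := fun b hb => by
    rw [mem_sdiff] at hb ⊢; exact ⟨hb.1, fun h => hb.2 (hss h)⟩
  -- distinct z values
  have hdist : ∀ w w' : A, w ∈ T'.filter (fun w => (∃ b ∈ S \ S', s b w ≠ 0) ∧ ∃ c ∈ R \ S, s c w ≠ 0) →
      w' ∈ T'.filter (fun w => (∃ b ∈ S \ S', s b w ≠ 0) ∧ ∃ c ∈ R \ S, s c w ≠ 0) → w ≠ w' →
      x w / u w ≠ x w' / u w' := by
    intro w w' hw hw' hne
    rw [mem_filter] at hw hw'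
    obtain ⟨hw, ⟨b, hb, hbw⟩, _⟩ := hw
    obtain ⟨hw', _, c, hcR, hcw⟩ := hw'
    refine hc'.F2 (hB b hb) (hRS c hcR) hw hw' ?_ hne hbw hcw
    rintro rfl
    exact (mem_sdiff.1 hcR).2 (mem_sdiff.1 hb).1
  -- ordered contradiction
  have main : ∀ w1 w2 w3 : A, w1 ∈ T'.filter (fun w => (∃ b ∈ S \ S', s b w ≠ 0) ∧ ∃ c ∈ R \ S, s c w ≠ 0) →
      w2 ∈ T'.filter (fun w => (∃ b ∈ S \ S', s b w ≠ 0) ∧ ∃ c ∈ R \ S, s c w ≠ 0) →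
      w3 ∈ T'.filter (fun w => (∃ b ∈ S \ S', s b w ≠ 0) ∧ ∃ c ∈ R \ S, s c w ≠ 0) →
      x w1 / u w1 < x w2 / u w2 → x w2 / u w2 < x w3 / u w3 → False := by
    intro w1 w2 w3 m1 m2 m3 l12 l23
    rw [mem_filter] at m1 m2 m3
    obtain ⟨hw1, ⟨b1, hb1, hs1⟩, _⟩ := m1
    obtain ⟨hw2, _, c2, hc2, hs2⟩ := m2
    obtain ⟨hw3, ⟨b3, hb3, hs3⟩, _⟩ := m3
    obtain ⟨a, ha, c, hcR, hcc, hsc⟩ : ∃ a ∈ T \ T', ∃ c ∈ R \ S, c ≠ c2 ∧ s c a ≠ 0 := by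
      by_contra hno
      push Not at hno
      have hsubR : S \ S' ⊆ R := sdiff_subset.trans hS.1
      have hM1 : (R \ (S \ S')).card = R.card - (S \ S').card := card_sdiff_of_subset hsubR
      have hc2M : c2 ∈ R \ (S \ S') := by
        rw [mem_sdiff] at hc2 ⊢; exact ⟨hc2.1, fun hh => hc2.2 (mem_sdiff.1 hh).1⟩
      have hM2 : ((R \ (S \ S')).erase c2).card = (R \ (S \ S')).card - 1 := card_erase_of_mem hc2M
      have hMpos : 0 < (R \ (S \ S')).card := card_pos.2 ⟨c2, hc2M⟩
      have hBpos : 0 < (S \ S').card := card_pos.2 ⟨b1, hb1⟩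
      have hb0M : b0 ∈ (R \ (S \ S')).erase c2 := by
        have := hc.hb0; have := h.hb0
        rw [mem_sdiff] at hc2
        refine mem_erase.2 ⟨fun hh => hc2.2 (hh ▸ hc.hb0), mem_sdiff.2 ⟨h.hb0, fun hh => (mem_sdiff.1 hh).2 hb0'⟩⟩
      have h1 := h.br.2 ((R \ (S \ S')).erase c2) ((erase_subset _ _).trans sdiff_subset) ⟨b0, hb0M⟩
        (by omega)
      have h2 : nb (pat s) C ((R \ (S \ S')).erase c2) ⊆ C \ (T \ T') := by
        intro a ha
        obtain ⟨haC, b, hb, hP⟩ := mem_nb.1 ha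
        refine mem_sdiff.2 ⟨haC, fun haT => ?_⟩
        rw [mem_erase, mem_sdiff, mem_sdiff] at hb
        by_cases hbS' : b ∈ S'
        · exact hP (hz b hbS' a haT)
        · exact hP (hno a haT b (mem_sdiff.2 ⟨hb.2.1, fun hbS => hb.2.2 ⟨hbS, hbS'⟩⟩) hb.1)
      have h3 := card_le_card h2
      rw [card_sdiff_of_subset (sdiff_subset.trans hTC)] at h3
      have := h.br.1
      omega
    exact mid_aux hc hc' hss hTT hz hcard pmh pmh2 hb1 hb3 hcR hc2 hcc ha hw1 hw2 hw3 hs1 hs3 hs2 hsc l12 l23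
  have d12 := hdist w1 w2 m1 m2 n12
  have d13 := hdist w1 w3 m1 m3 n13
  have d23 := hdist w2 w3 m2 m3 n23
  rcases lt_or_gt_of_ne d12 with g12 | g12 <;> rcases lt_or_gt_of_ne d13 with g13 | g13 <;>
    rcases lt_or_gt_of_ne d23 with g23 | g23
  · exact main w1 w2 w3 m1 m2 m3 g12 g23
  · exact main w1 w3 w2 m1 m3 m2 g13 g23
  · linarith
  · exact main w3 w1 w2 m3 m1 m2 g13 g12
  · exact main w2 w1 w3 m2 m1 m3 g12 g13
  · linarith
  · exact main w2 w3 w1 m2 m3 m1 g23 g13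
  · exact main w3 w2 w1 m3 m2 m1 g23 g12

end
end TFH

namespace TFH
open Finset
open scoped Classical
set_option linter.all false
variable {A B : Type*}

theorem ec_split_left (P : B → A → Prop) {R S : Finset B} (C : Finset A) (h : S ⊆ R) :
    ec P R C = ec P S C + ec P (R \ S) C := by
  unfold ec; rw [add_comm, sum_sdiff h]

theorem ec_split_right (P : B → A → Prop) (R : Finset B) {C T : Finset A} (h : T ⊆ C) :
    ec P R C = ec P R T + ec P R (C \ T) := by
  rw [ec_comm, ec_comm, ec_comm, add_comm, sum_sdiff h]

theorem ec_congr {P Q : B → A → Prop} {R : Finset B} {C : Finset A}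
    (h : ∀ b ∈ R, ∀ a ∈ C, (P b a ↔ Q b a)) : ec P R C = ec Q R C := by
  unfold ec
  apply sum_congr rfl
  intro b hb
  congr 1
  exact filter_congr (fun a ha => h b hb a ha)

theorem ec_insert_left (P : B → A → Prop) {S : Finset B} (C : Finset A) {c : B} (h : c ∉ S) :
    ec P (insert c S) C = (C.filter (fun a => P c a)).card + ec P S C := by
  unfold ec; rw [sum_insert h]

theorem ec_insert_right (P : B → A → Prop) (S : Finset B) {C : Finset A} {t : A} (h : t ∉ C) :
    ec P S (insert t C) = (S.filter (fun b => P b t)).card + ec P S C := by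
  rw [ec_comm, ec_comm, sum_insert h]

theorem nb_split_right (P : B → A → Prop) (X : Finset B) {T T' : Finset A} (h : T' ⊆ T) :
    (nb P T X).card = (nb P T' X).card + (nb P (T \ T') X).card := by
  unfold nb
  rw [← card_union_of_disjoint, ← filter_union, union_sdiff_of_subset h]
  exact disjoint_filter_filter disjoint_sdiff

theorem contract_brace {P P2 : B → A → Prop} {R S : Finset B} {C T : Finset A} (hST : nb P C S = T)
    (hS : S ⊆ R) (hc : R.card = C.card) (hT : T.card = S.card + 1) {t0 : A} (ht0 : t0 ∈ T)
    (h1 : ∀ c ∈ R \ S, ∀ a ∈ C \ T, (P2 c a ↔ P c a))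
    (h2 : ∀ c ∈ R \ S, (P2 c t0 ↔ ∃ t ∈ T, P c t))
    (ha : ∀ X ⊆ R \ S, X.Nonempty → X.card + 2 ≤ (R \ S).card →
      (S ∪ X).card + 2 ≤ (nb P C (S ∪ X)).card)
    (hb : ∀ X ⊆ R \ S, X.Nonempty → X.card + 2 ≤ (R \ S).card → X.card + 2 ≤ (nb P C X).card) :
    Brace P2 (R \ S) (insert t0 (C \ T)) := by
  have hTC : T ⊆ C := hST ▸ nb_sub _ _ _
  constructor
  · rw [card_insert_of_notMem (by grind), card_sdiff_of_subset hS, card_sdiff_of_subset hTC]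
    have := card_le_card hTC
    omega
  · intro X hX hne hle
    by_cases hadj : ∃ c ∈ X, ∃ t ∈ T, P c t
    · obtain ⟨c, hcX, t, ht, hP⟩ := hadj
      have hd : Disjoint S X := by
        rw [Finset.disjoint_left]; intro b hb hb2; have := hX hb2; grind
      have g1 := ha X hX hne hle
      rw [card_union_of_disjoint hd] at g1
      have g2 : insert t0 (nb P C (S ∪ X) \ T) ⊆ nb P2 (insert t0 (C \ T)) X := by
        intro a ha
        rw [mem_insert] at ha
        rcases ha with rfl | ha
        · exact mem_nb.2 ⟨mem_insert_self _ _, c, hcX, (h2 c (hX hcX)).2 ⟨t, ht, hP⟩⟩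
        · rw [mem_sdiff, nb_union, hST, mem_union] at ha
          obtain ⟨h3, b, hb, hP⟩ := mem_nb.1 (ha.1.resolve_left ha.2)
          have h4 := mem_sdiff.2 ⟨h3, ha.2⟩
          exact mem_nb.2 ⟨mem_insert_of_mem h4, b, hb, (h1 b (hX hb) a h4).2 hP⟩
      have g3 := card_le_card g2
      rw [card_insert_of_notMem (by grind), card_sdiff_of_subset (by rw [← hST]; exact nb_mono P subset_union_left)] at g3
      omega
    · push Not at hadj
      refine (hb X hX hne hle).trans (card_le_card ?_)
      intro a ha
      obtain ⟨h3, b, hb, hP⟩ := mem_nb.1 ha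
      have h4 : a ∈ C \ T := mem_sdiff.2 ⟨h3, fun h => hadj b hb a h hP⟩
      exact mem_nb.2 ⟨mem_insert_of_mem h4, b, hb, (h1 b (hX hb) a h4).2 hP⟩

theorem g1_card {P P1 : B → A → Prop} {R S X : Finset B} {C T : Finset A} (hST : nb P C S = T)
    {c0 : B} (hc0 : c0 ∈ R \ S) (h1 : ∀ b ∈ S, ∀ a ∈ T, (P1 b a ↔ P b a))
    (h2 : ∀ a ∈ T, (P1 c0 a ↔ ∃ c ∈ R \ S, P c a)) (hX : X ⊆ insert c0 S) (hcX : c0 ∈ X) :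
    (nb P C (X.erase c0 ∪ (R \ S))).card ≤ (C.card - T.card) + (nb P1 T X).card := by
  have hTC : T ⊆ C := hST ▸ nb_sub _ _ _
  have : nb P C (X.erase c0 ∪ (R \ S)) ⊆ (C \ T) ∪ nb P1 T X := by
    intro a ha
    obtain ⟨haC, b, hb, hP⟩ := mem_nb.1 ha
    by_cases haT : a ∈ T
    · refine mem_union_right _ (mem_nb.2 ⟨haT, ?_⟩)
      rcases mem_union.1 hb with hb | hb
      · have hbX := mem_erase.1 hb
        exact ⟨b, hbX.2, (h1 b ((mem_insert.1 (hX hbX.2)).resolve_left hbX.1) a haT).2 hP⟩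
      · exact ⟨c0, hcX, (h2 a haT).2 ⟨b, hb, hP⟩⟩
    · exact mem_union_left _ (mem_sdiff.2 ⟨haC, haT⟩)
  have h3 := (card_le_card this).trans (card_union_le _ _)
  rwa [card_sdiff_of_subset hTC] at h3

theorem g1_nb {P P1 : B → A → Prop} {S X : Finset B} {C T : Finset A} (hST : nb P C S = T)
    (h1 : ∀ b ∈ S, ∀ a ∈ T, (P1 b a ↔ P b a)) (hX : X ⊆ S) : nb P1 T X = nb P C X := by
  ext a
  constructor
  · intro ha
    obtain ⟨haT, b, hb, hP⟩ := mem_nb.1 ha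
    exact mem_nb.2 ⟨nb_sub P C S (hST ▸ haT), b, hb, (h1 b (hX hb) a haT).1 hP⟩
  · intro ha
    have haT : a ∈ T := hST ▸ nb_mono P hX ha
    obtain ⟨haC, b, hb, hP⟩ := mem_nb.1 ha
    exact mem_nb.2 ⟨haT, b, hb, (h1 b (hX hb) a haT).2 hP⟩

section
variable {s : B → A → ℝ} {R S : Finset B} {C : Finset A} {b0 : B} {a0 : A}

/-- sets of the first contraction containing the new vertex -/
theorem Ctx.g1 (h : Ctx s R C b0 a0) (hS : Tight (pat (del s b0 a0)) R C S) {P1 : B → A → Prop}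
    {c0 : B} (hc0 : c0 ∈ R \ S)
    (h1 : ∀ b ∈ S, ∀ a ∈ nb (pat (del s b0 a0)) C S, (P1 b a ↔ pat (del s b0 a0) b a))
    (h2 : ∀ a ∈ nb (pat (del s b0 a0)) C S, (P1 c0 a ↔ ∃ c ∈ R \ S, pat (del s b0 a0) c a))
    {X : Finset B} (hX : X ⊆ insert c0 S) (hcX : c0 ∈ X) (hle : X.card ≤ S.card) :
    X.card + 1 ≤ (nb P1 (nb (pat (del s b0 a0)) C S) X).card ∧
      (X.card + 1 ≤ S.card → X.card + 2 ≤ (nb P1 (nb (pat (del s b0 a0)) C S) X).card) := by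
  have hE := h.elem0
  have g := g1_card rfl hc0 h1 h2 hX hcX
  have hXS : X.erase c0 ⊆ S := by
    intro b hb
    rw [mem_erase] at hb
    exact (mem_insert.1 (hX hb.2)).resolve_left hb.1
  have hd : Disjoint (X.erase c0) (R \ S) := by
    rw [Finset.disjoint_left]; intro b hb hb2; exact (mem_sdiff.1 hb2).2 (hXS hb)
  have k1 := card_union_of_disjoint hd
  have k2 : (X.erase c0).card = X.card - 1 := card_erase_of_mem hcX
  have k3 : 0 < X.card := card_pos.2 ⟨_, hcX⟩
  have k4 := card_sdiff_of_subset hS.1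
  have k5 := hS.2.2.2
  have k6 := hS.2.2.1
  have k7 := h.br.1
  have hsub : X.erase c0 ∪ (R \ S) ⊆ R := union_subset (hXS.trans hS.1) sdiff_subset
  have hne : (X.erase c0 ∪ (R \ S)).Nonempty := ⟨c0, mem_union_right _ hc0⟩
  constructor
  · have := hE.2 _ hsub hne (by omega)
    omega
  · intro hle2
    have := not_tight_card hE hsub hne (by omega) (by
      intro ht
      refine h.tight_a0 ht (nb_mono _ subset_union_right (tight_compl hE hS ?_))
      exact mem_sdiff.2 ⟨h.ha0, h.tight_a0 hS⟩)
    omega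

set_option maxHeartbeats 1000000 in
theorem Ctx.K (h : Ctx s R C b0 a0)
    (IH : ∀ (s' : B → A → ℝ) (R' : Finset B) (C' : Finset A), Pf s' R' C' → Brace (pat s') R' C' →
      2 ≤ R'.card → R'.card < R.card → ec (pat s') R' C' + 4 ≤ 4 * R'.card) (m : ℕ) :
    ∀ S : Finset B, S.card = m → Tight (pat (del s b0 a0)) R C S →
      ec (pat (del s b0 a0)) S (nb (pat (del s b0 a0)) C S) +
        (nb (pat (del s b0 a0)) (nb (pat (del s b0 a0)) C S) (R \ S)).card ≤ 4 * S.card := by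
  induction m using Nat.strong_induction_on with
  | _ m ih =>
  intro S hm hS
  have hE := h.elem0
  have hpf0 : Pf (del s b0 a0) R C := h.pf.del
  obtain ⟨c0, hc0⟩ : (R \ S).Nonempty := by
    rw [← card_pos, card_sdiff_of_subset hS.1]; have := hS.2.2.1; omega
  have hc0S := (mem_sdiff.1 hc0).2
  obtain ⟨s1, hpf1, h11', h12'⟩ := contract_T hpf0 hE hS hc0
  have h11 : ∀ b ∈ S, ∀ a ∈ nb (pat (del s b0 a0)) C S, (pat s1 b a ↔ pat (del s b0 a0) b a) := by
    intro b hb a ha; unfold pat; rw [h11' b hb a ha]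
  have h12 : ∀ a ∈ nb (pat (del s b0 a0)) C S, (pat s1 c0 a ↔ ∃ c ∈ R \ S, pat (del s b0 a0) c a) := h12'
  have hg1 := fun {X : Finset B} (hX : X ⊆ insert c0 S) => h.g1 hS hc0 h11 h12 hX
  have hga := fun {X : Finset B} (hX : X ⊆ S) => g1_nb rfl h11 hX
  have ha0 := h.tight_a0 hS
  have hTc := hS.2.2.2
  have hScard := hS.2.2.1
  have hci : (insert c0 S).card = S.card + 1 := card_insert_of_notMem hc0S
  have hpc : ec (pat s1) (insert c0 S) (nb (pat (del s b0 a0)) C S) =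
      (nb (pat (del s b0 a0)) (nb (pat (del s b0 a0)) C S) (R \ S)).card +
        ec (pat (del s b0 a0)) S (nb (pat (del s b0 a0)) C S) := by
    rw [ec_insert_left _ _ hc0S, ec_congr h11]
    congr 2
    unfold nb
    exact filter_congr (fun a ha => h12 a ha)
  by_cases hex : ∃ X, X ⊂ S ∧ Tight (pat (del s b0 a0)) R C X
  swap
  · have hbr : Brace (pat s1) (insert c0 S) (nb (pat (del s b0 a0)) C S) := by
      refine ⟨by omega, fun X hX hne hle => ?_⟩
      by_cases hcX : c0 ∈ X
      · exact (hg1 hX hcX (by omega)).2 (by omega)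
      · have hXS : X ⊆ S := fun b hb => (mem_insert.1 (hX hb)).resolve_left (fun h => hcX (h ▸ hb))
        rw [hga hXS]
        refine not_tight_card hE (hXS.trans hS.1) hne (by omega) (fun ht => hex ⟨X, ?_, ht⟩)
        refine hXS.ssubset_of_ne ?_
        rintro rfl; omega
    have := IH s1 _ _ hpf1 hbr (by have := hS.2.1.card_pos; omega) (by omega)
    omega
  · -- maximal tight proper subset
    obtain ⟨X0, hX0⟩ := hex
    obtain ⟨S', hS'm, hS'max⟩ := exists_max_image
      (S.powerset.filter (fun X => X ⊂ S ∧ Tight (pat (del s b0 a0)) R C X)) card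
      ⟨X0, by rw [mem_filter, mem_powerset]; exact ⟨hX0.1.1, hX0⟩⟩
    rw [mem_filter] at hS'm
    obtain ⟨_, hss, hS'⟩ := hS'm
    have hmax : ∀ X, S' ⊂ X → X ⊂ S → ¬ Tight (pat (del s b0 a0)) R C X := by
      intro X h1 h2 h3
      have := hS'max X (by rw [mem_filter, mem_powerset]; exact ⟨h2.1, h2, h3⟩)
      have := card_lt_card h1
      omega
    have hssl := card_lt_card hss
    have hsub := hss.1
    have hmid := h.mid hS hS' hsub hmax
    have hb0' := h.tight_b0 hS'
    have ha0' := h.tight_a0 hS'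
    have ihS' := ih S'.card (by omega) S' rfl hS'
    obtain ⟨uS', xS', hcut'⟩ := h.cut hS'
    have hTT : nb (pat (del s b0 a0)) C S' ⊆ nb (pat (del s b0 a0)) C S := nb_mono _ hsub
    have hTc' := hS'.2.2.2
    have hnbS' : nb (pat s1) (nb (pat (del s b0 a0)) C S) S' = nb (pat (del s b0 a0)) C S' := hga hsub
    have hpat : ∀ (b : B) (a : A), a ≠ a0 → (pat s b a ↔ pat (del s b0 a0) b a) := by
      intro b a ha; rw [pat_del]; simp [ha]
    have hEl1 : Elem (pat s1) (insert c0 S) (nb (pat (del s b0 a0)) C S) := by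
      refine ⟨by omega, fun X hX hne hle => ?_⟩
      by_cases hcX : c0 ∈ X
      · exact (hg1 hX hcX (by omega)).1
      · have hXS : X ⊆ S := fun b hb => (mem_insert.1 (hX hb)).resolve_left (fun h => hcX (h ▸ hb))
        rw [hga hXS]
        exact hE.2 X (hXS.trans hS.1) hne (by omega)
    have hforest := hcut'.forest (Q := S \ S') (by
      intro b hb; rw [mem_sdiff] at hb ⊢; exact ⟨hS.1 hb.1, hb.2⟩)
    set P0 := pat (del s b0 a0) with hP0
    set T := nb P0 C S with hT
    set T' := nb P0 C S' with hT'
    have hcT := card_sdiff_of_subset hTT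
    have hcS := card_sdiff_of_subset hsub
    have htight1 : Tight (pat s1) (insert c0 S) T S' :=
      ⟨hsub.trans (subset_insert _ _), hS'.2.1, by omega, by rw [hnbS']; exact hTc'⟩
    obtain ⟨t0, ht0⟩ : T'.Nonempty := by rw [← card_pos]; omega
    obtain ⟨s2, hpf2, h21', h22'⟩ := contract hpf1 hEl1 htight1 (t0 := t0) (by rw [hnbS']; exact ht0)
    rw [hnbS'] at hpf2 h21' h22'
    have hins : insert c0 S \ S' = insert c0 (S \ S') := by
      ext b; simp only [mem_sdiff, mem_insert]; have := hc0S; grind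
    have h21 : ∀ c ∈ insert c0 S \ S', ∀ a ∈ T \ T', (pat s2 c a ↔ pat s1 c a) := by
      intro b hb a ha; unfold pat; rw [h21' b hb a ha]
    have h22 : ∀ c ∈ insert c0 S \ S', (pat s2 c t0 ↔ ∃ t ∈ T', pat s1 c t) := h22'
    have hc0B : c0 ∉ S \ S' := fun hh => hc0S (mem_sdiff.1 hh).1
    have hcM : (insert c0 S \ S').card = (S \ S').card + 1 := by
      rw [hins, card_insert_of_notMem hc0B]
    have hXc : ∀ X ⊆ insert c0 S \ S', c0 ∉ X → X ⊆ S \ S' := by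
      intro X hX hcX b hb
      have := hX hb
      rw [hins, mem_insert] at this
      exact this.resolve_left (fun h => hcX (h ▸ hb))
    have hbr2 : Brace (pat s2) (insert c0 S \ S') (insert t0 (T \ T')) := by
      refine contract_brace hnbS' (hsub.trans (subset_insert _ _)) hEl1.1 hTc' ht0 h21 h22 ?_ ?_
      · intro X hX hne hle
        have hd : Disjoint S' X := by
          rw [Finset.disjoint_left]; intro b hb hb2; exact (mem_sdiff.1 (hX hb2)).2 hb
        have hcu := card_union_of_disjoint hd
        have hsu : S' ∪ X ⊆ insert c0 S :=
          union_subset (hsub.trans (subset_insert _ _)) (hX.trans sdiff_subset)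
        have hpos := hne.card_pos
        by_cases hcX : c0 ∈ X
        · exact (hg1 hsu (mem_union_right _ hcX) (by omega)).2 (by omega)
        · have hXS := hXc X hX hcX
          have hsu2 : S' ∪ X ⊆ S := union_subset hsub (hXS.trans sdiff_subset)
          rw [hga hsu2]
          refine not_tight_card hE (hsu2.trans hS.1) (hne.mono subset_union_right) (by omega) (hmax _ ?_ ?_)
          · refine subset_union_left.ssubset_of_ne (fun hh => ?_)
            rw [← hh] at hcu; omega
          · refine hsu2.ssubset_of_ne (fun hh => ?_)
            rw [hh] at hcu; omega
      · intro X hX hne hle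
        by_cases hcX : c0 ∈ X
        · exact (hg1 (hX.trans sdiff_subset) hcX (by omega)).2 (by omega)
        · have hXS := hXc X hX hcX
          have hXS2 := hXS.trans sdiff_subset
          rw [hga hXS2]
          refine not_tight_card hE (hXS2.trans hS.1) hne (by omega) (fun ht => ?_)
          exact (mem_sdiff.1 (hXS (h.tight_b0 ht))).2 hb0'
    have hIH := IH s2 _ _ hpf2 hbr2 (by omega) (by omega)
    -- counting
    have hnaT : ∀ a ∈ T, a ≠ a0 := fun a ha hh => ha0 (hh ▸ ha)
    have ht0n : t0 ∉ T \ T' := fun hh => (mem_sdiff.1 hh).2 ht0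
    rw [ec_insert_right _ _ ht0n] at hIH
    have c1 : ec (pat s2) (insert c0 S \ S') (T \ T') =
        (nb P0 (T \ T') (R \ S)).card + ec P0 (S \ S') (T \ T') := by
      rw [ec_congr h21, hins, ec_insert_left _ _ hc0B]
      congr 1
      · congr 1
        exact filter_congr (fun a ha => h12 a (mem_sdiff.1 ha).1)
      · exact ec_congr (fun b hb a ha => h11 b (mem_sdiff.1 hb).1 a (mem_sdiff.1 ha).1)
    have q_iff : ∀ b ∈ S \ S', (pat s2 b t0 ↔ ∃ t ∈ T', pat s b t) := by
      intro b hb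
      rw [h22 b (by rw [hins]; exact mem_insert_of_mem hb)]
      constructor
      · rintro ⟨t, ht, hp⟩
        exact ⟨t, ht, (hpat b t (hnaT t (hTT ht))).2 ((h11 b (mem_sdiff.1 hb).1 t (hTT ht)).1 hp)⟩
      · rintro ⟨t, ht, hp⟩
        exact ⟨t, ht, (h11 b (mem_sdiff.1 hb).1 t (hTT ht)).2 ((hpat b t (hnaT t (hTT ht))).1 hp)⟩
    have c2 : ((S \ S').filter (fun c => ∃ t ∈ T', pat s c t)).card +
        (if (nb P0 T' (R \ S)).Nonempty then 1 else 0) ≤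
        ((insert c0 S \ S').filter (fun b => pat s2 b t0)).card := by
      have e : (S \ S').filter (fun c => ∃ t ∈ T', pat s c t) = (S \ S').filter (fun b => pat s2 b t0) :=
        filter_congr (fun b hb => (q_iff b hb).symm)
      rw [e, hins]
      split_ifs with hY
      · have : pat s2 c0 t0 := by
          rw [h22 c0 (by rw [hins]; exact mem_insert_self _ _)]
          obtain ⟨t, ht⟩ := hY
          obtain ⟨ht, hh⟩ := mem_nb.1 ht
          exact ⟨t, ht, (h12 t (hTT ht)).2 hh⟩
        rw [filter_insert, if_pos this, card_insert_of_notMem (by simp [hc0S])]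
      · exact card_le_card (filter_subset_filter _ (subset_insert _ _))
    have c3 : ec P0 S T = ec P0 S' T' + ec P0 (S \ S') T' + ec P0 (S \ S') (T \ T') := by
      rw [ec_split_left P0 T hsub, ec_split_right P0 (S \ S') hTT, ← add_assoc, ec_nb P0 S' T]
      have : nb P0 T S' = T' := g1_nb rfl (fun b hb a ha => Iff.rfl) hsub
      rw [this]
    have c4 : (nb P0 T (R \ S)).card = (nb P0 T' (R \ S)).card + (nb P0 (T \ T') (R \ S)).card :=
      nb_split_right P0 _ hTT
    have c5 : nb P0 T' (R \ S') = nb P0 T' (S \ S') ∪ nb P0 T' (R \ S) := by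
      rw [← nb_union]
      congr 1
      ext b; simp only [mem_sdiff, mem_union]
      have h1 := @hsub b; have hSR := hS.1; have h2 := @hSR b
      clear * - h1 h2; tauto
    rw [c5] at ihS'
    have c6 := card_union_add_card_inter (nb P0 T' (S \ S')) (nb P0 T' (R \ S))
    have c7 : (nb P0 T' (S \ S') ∩ nb P0 T' (R \ S)).card ≤ 2 := by
      refine (card_le_card ?_).trans hmid
      intro w hw
      obtain ⟨hw1, hw2⟩ := mem_inter.1 hw
      obtain ⟨hw, b, hb, hp⟩ := mem_nb.1 hw1
      obtain ⟨_, c, hc, hp'⟩ := mem_nb.1 hw2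
      have hwa := hnaT w (hTT hw)
      exact mem_filter.2 ⟨hw, ⟨b, hb, (hpat b w hwa).2 hp⟩, ⟨c, hc, (hpat c w hwa).2 hp'⟩⟩
    have c8 : nb (pat s) T' (S \ S') = nb P0 T' (S \ S') := by
      unfold nb
      apply filter_congr
      intro a ha
      simp only [hpat _ a (hnaT a (hTT ha))]
    have c9 : ec (pat s) (S \ S') T' = ec P0 (S \ S') T' :=
      ec_congr (fun b hb a ha => hpat b a (hnaT a (hTT ha)))
    rw [c8, c9] at hforest
    by_cases hW : (nb P0 T' (S \ S')).Nonempty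
    · have hf := hforest hW
      by_cases hY : (nb P0 T' (R \ S)).Nonempty
      · rw [if_pos hY] at c2
        omega
      · rw [if_neg hY] at c2
        rw [not_nonempty_iff_eq_empty] at hY
        have hY0 : (nb P0 T' (R \ S)).card = 0 := by rw [hY]; rfl
        have hYi := card_le_card (inter_subset_right (s₁ := nb P0 T' (S \ S')) (s₂ := nb P0 T' (R \ S)))
        omega
    · rw [not_nonempty_iff_eq_empty] at hW
      have e0 : ec P0 (S \ S') T' = 0 := by
        rw [ec_nb, hW]; simp [ec]
      rw [hW] at ihS'
      rw [empty_union] at ihS'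
      omega

end
end TFH

namespace TFH
open Finset
open scoped Classical
set_option linter.all false
variable {A B : Type*}
section
variable {s : B → A → ℝ} {R : Finset B} {C : Finset A} {b0 : B} {a0 : A}

theorem ec_del (hb0 : b0 ∈ R) (ha0 : a0 ∈ C) (hs : s b0 a0 ≠ 0) :
    ec (pat s) R C = ec (pat (del s b0 a0)) R C + 1 := by
  have e : insert b0 (R.erase b0) = R := insert_erase hb0
  rw [← e, ec_insert_left _ _ (notMem_erase b0 R), ec_insert_left _ _ (notMem_erase b0 R)]
  have e1 : ec (pat s) (R.erase b0) C = ec (pat (del s b0 a0)) (R.erase b0) C := by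
    apply ec_congr
    intro b hb a ha
    rw [pat_del]
    have := (mem_erase.1 hb).1
    tauto
  have e2 : C.filter (fun a => pat s b0 a) = insert a0 (C.filter (fun a => pat (del s b0 a0) b0 a)) := by
    ext a
    simp only [mem_filter, mem_insert, pat_del, true_and]
    have : pat s b0 a0 := hs
    by_cases h : a = a0
    · subst h; tauto
    · tauto
  have e3 : a0 ∉ C.filter (fun a => pat (del s b0 a0) b0 a) := by
    simp [mem_filter, pat_del]
  rw [e1, e2, card_insert_of_notMem e3]
  omega

theorem Ctx.main (h : Ctx s R C b0 a0)
    (IH : ∀ (s' : B → A → ℝ) (R' : Finset B) (C' : Finset A), Pf s' R' C' → Brace (pat s') R' C' →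
      2 ≤ R'.card → R'.card < R.card → ec (pat s') R' C' + 4 ≤ 4 * R'.card)
    (hnb : ¬ Brace (pat (del s b0 a0)) R C) : ec (pat s) R C + 4 ≤ 4 * R.card := by
  have hE := h.elem0
  have hpf0 : Pf (del s b0 a0) R C := h.pf.del
  have hex : ∃ S, Tight (pat (del s b0 a0)) R C S := by
    by_contra hcon
    push Not at hcon
    exact hnb ⟨hE.1, fun X hX hne hle => not_tight_card hE hX hne hle (hcon X)⟩
  obtain ⟨X0, hX0⟩ := hex
  obtain ⟨S, hSm, hSmax⟩ := exists_max_image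
      (R.powerset.filter (fun X => Tight (pat (del s b0 a0)) R C X)) card
      ⟨X0, by rw [mem_filter, mem_powerset]; exact ⟨hX0.1, hX0⟩⟩
  rw [mem_filter] at hSm
  have hS := hSm.2
  have hmax : ∀ X, Tight (pat (del s b0 a0)) R C X → X.card ≤ S.card := fun X hX =>
    hSmax X (by rw [mem_filter, mem_powerset]; exact ⟨hX.1, hX⟩)
  have hK := h.K IH S.card S rfl hS
  have ha0 := h.tight_a0 hS
  have hb0 := h.tight_b0 hS
  obtain ⟨u, x, hcut⟩ := h.cut hS
  have hTc := hS.2.2.2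
  have hSR := hS.1
  have hScard := hS.2.2.1
  have hRS := card_sdiff_of_subset hSR
  obtain ⟨t0, ht0⟩ : (nb (pat (del s b0 a0)) C S).Nonempty := by rw [← card_pos]; omega
  obtain ⟨s2, hpf2, h21, h22⟩ := contract hpf0 hE hS ht0
  have hcross := tight_cross hE hS
  have hforest := hcut.forest (Q := R \ S) (Subset.refl _)
  have hpat : ∀ (b : B) (a : A), a ≠ a0 → (pat s b a ↔ pat (del s b0 a0) b a) := by
    intro b a ha; rw [pat_del]; simp [ha]
  have hpos := hS.2.1.card_pos
  have hbr2 : Brace (pat s2) (R \ S) (insert t0 (C \ nb (pat (del s b0 a0)) C S)) := by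
    refine contract_brace rfl hSR hE.1 hTc ht0 (fun c hc a ha => by unfold pat; rw [h21 c hc a ha]) h22 ?_ ?_
    · intro X hX hne hle
      have hd : Disjoint S X := by
        rw [Finset.disjoint_left]; intro b hb hb2; exact (mem_sdiff.1 (hX hb2)).2 hb
      have hcu := card_union_of_disjoint hd
      have hp := hne.card_pos
      refine not_tight_card hE (union_subset hSR (hX.trans sdiff_subset)) (hne.mono subset_union_right) (by omega) (fun ht => ?_)
      have := hmax _ ht
      omega
    · intro X hX hne hle
      refine not_tight_card hE (hX.trans sdiff_subset) hne (by omega) (fun ht => ?_)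
      exact (mem_sdiff.1 (hX (h.tight_b0 ht))).2 hb0
  have hIH := IH s2 _ _ hpf2 hbr2 (by omega) (by omega)
  rw [ec_insert_right _ _ (fun hh => (mem_sdiff.1 hh).2 ht0)] at hIH
  have c0 := ec_del h.hb0 h.ha0 h.hs
  set P0 := pat (del s b0 a0) with hP0
  set T := nb P0 C S with hT
  have hnaT : ∀ a ∈ T, a ≠ a0 := fun a ha hh => ha0 (hh ▸ ha)
  have c1 : ec (pat s2) (R \ S) (C \ T) = ec P0 (R \ S) (C \ T) :=
    ec_congr (fun c hc a ha => by unfold pat; rw [h21 c hc a ha]; exact Iff.rfl)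
  have c2 : (R \ S).filter (fun b => pat s2 b t0) = (R \ S).filter (fun c => ∃ t ∈ T, pat s c t) := by
    apply filter_congr
    intro c hc
    refine (h22 c hc).trans ?_
    constructor
    · rintro ⟨t, ht, hp⟩; exact ⟨t, ht, (hpat c t (hnaT t ht)).2 hp⟩
    · rintro ⟨t, ht, hp⟩; exact ⟨t, ht, (hpat c t (hnaT t ht)).1 hp⟩
  have c3 : ec P0 R C = ec P0 S T + (ec P0 (R \ S) T + ec P0 (R \ S) (C \ T)) := by
    rw [ec_split_left P0 C hSR, ec_split_right P0 (R \ S) (nb_sub P0 C S), ec_nb P0 S C]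
  have c8 : nb (pat s) T (R \ S) = nb P0 T (R \ S) := by
    unfold nb
    apply filter_congr
    intro a ha
    simp only [hpat _ a (hnaT a ha)]
  have c9 : ec (pat s) (R \ S) T = ec P0 (R \ S) T :=
    ec_congr (fun b hb a ha => hpat b a (hnaT a ha))
  have hne : (nb P0 T (R \ S)).Nonempty := by
    obtain ⟨c, hc, t, ht, hp⟩ := hcross
    exact ⟨t, mem_nb.2 ⟨ht, c, hc, hp⟩⟩
  rw [c8, c9] at hforest
  have hf := hforest hne
  rw [c2, c1] at hIH
  omega

end

theorem thmE (n : ℕ) : ∀ (s : B → A → ℝ) (R : Finset B) (C : Finset A), R.card = n → Pf s R C →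
    Brace (pat s) R C → 2 ≤ R.card → ec (pat s) R C + 4 ≤ 4 * R.card := by
  induction n using Nat.strong_induction_on with
  | _ n ih =>
  intro s R C hn
  have IH : ∀ (s' : B → A → ℝ) (R' : Finset B) (C' : Finset A), Pf s' R' C' → Brace (pat s') R' C' →
      2 ≤ R'.card → R'.card < R.card → ec (pat s') R' C' + 4 ≤ 4 * R'.card :=
    fun s' R' C' h1 h2 h3 h4 => ih R'.card (by omega) s' R' C' rfl h1 h2 h3
  clear ih
  induction hm : ec (pat s) R C using Nat.strong_induction_on generalizing s with
  | _ m ihm =>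
  subst hm
  intro hpf hbr h2
  by_cases h3 : R.card = 2
  · have : ec (pat s) R C ≤ ∑ b ∈ R, 2 := by
      unfold ec
      apply sum_le_sum
      intro b hb
      refine (card_filter_le _ _).trans ?_
      rw [← hbr.1, h3]
    rw [sum_const, h3, smul_eq_mul] at this
    omega
  by_contra hcon
  obtain ⟨b, hb⟩ : R.Nonempty := by rw [← card_pos]; omega
  -- every edge deletion is a brace
  have hbd : ∀ b ∈ R, ∀ a ∈ C, s b a ≠ 0 → Brace (pat (del s b a)) R C := by
    intro b hb a ha hs
    by_contra hnb
    exact hcon ((Ctx.mk hpf hbr (by omega) hb ha hs).main IH hnb)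
  have hdeg : ∀ b ∈ R, 4 ≤ (C.filter (fun a => pat s b a)).card := by
    intro b hb
    by_contra hlt
    have h1 := hbr.2 {b} (by simpa using hb) (by simp) (by simp; omega)
    obtain ⟨a, ha⟩ : (nb (pat s) C {b}).Nonempty := by rw [← card_pos]; omega
    obtain ⟨haC, b', hb', hp⟩ := mem_nb.1 ha
    rw [mem_singleton] at hb'
    subst hb'
    have h2 := (hbd b' hb a haC hp).2 {b'} (by simpa using hb) (by simp) (by simp; omega)
    have h3 : nb (pat (del s b' a)) C {b'} ⊆ (C.filter (fun a => pat s b' a)).erase a := by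
      intro x hx
      obtain ⟨hxC, b, hb, hp'⟩ := mem_nb.1 hx
      rw [mem_singleton] at hb
      subst hb
      rw [pat_del] at hp'
      rw [mem_erase, mem_filter]
      exact ⟨fun h => hp'.2 ⟨rfl, h⟩, hxC, hp'.1⟩
    have h4 := card_le_card h3
    have hmem : a ∈ C.filter (fun a => pat s b' a) := mem_filter.2 ⟨haC, hp⟩
    rw [card_erase_of_mem hmem] at h4
    rw [card_singleton] at h2
    omega
  have hge : 4 * R.card ≤ ec (pat s) R C := by
    have : ∑ b ∈ R, 4 ≤ ec (pat s) R C := sum_le_sum hdeg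
    rw [sum_const, smul_eq_mul] at this
    omega
  obtain ⟨a, ha⟩ : (C.filter (fun a => pat s b a)).Nonempty := by
    rw [← card_pos]; have := hdeg b hb; omega
  rw [mem_filter] at ha
  have h5 := ec_del (R := R) hb ha.1 ha.2
  have := ihm _ (by omega) (del s b a) rfl hpf.del (hbd b hb a ha.1 ha.2) h2
  omega

end TFH

namespace TFH
open Finset
open scoped Classical
set_option linter.all false
variable {A B : Type*}

theorem thmKA {s : B → A → ℝ} {R S : Finset B} {C : Finset A} {k : ℕ} (hk : 4 ≤ k) (hPf : Pf s R C)
    (hE : Elem (pat s) R C) (hdeg : ∀ b ∈ R, (C.filter (fun a => pat s b a)).card = k)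
    (hS : Tight (pat s) R C S)
    (hB : ∀ X, Tight (pat s) R C X → S.card ≤ X.card)
    (hA : ∀ Y, Tight (fun a b => pat s b a) C R Y → S.card ≤ Y.card) : False := by
  have hSc := hS.2.2.1
  have hTc := hS.2.2.2
  have hSR := hS.1
  have hpos := hS.2.1.card_pos
  have hRS := card_sdiff_of_subset hSR
  have hRC := hE.1
  obtain ⟨c, hc, t, ht, hct⟩ := tight_cross hE hS
  obtain ⟨s1, hpf1, h11', h12'⟩ := contract_T hPf hE hS hc
  have h11 : ∀ b ∈ S, ∀ a ∈ nb (pat s) C S, (pat s1 b a ↔ pat s b a) := by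
    intro b hb a ha; unfold pat; rw [h11' b hb a ha]
  have h12 : ∀ a ∈ nb (pat s) C S, (pat s1 c a ↔ ∃ c ∈ R \ S, pat s c a) := h12'
  have hcS := (mem_sdiff.1 hc).2
  have hci : (insert c S).card = S.card + 1 := card_insert_of_notMem hcS
  have hbr : Brace (pat s1) (insert c S) (nb (pat s) C S) := by
    refine ⟨by omega, fun X hX hne hle => ?_⟩
    by_cases hcX : c ∈ X
    · by_contra hlt
      have hg := g1_card rfl hc h11 h12 hX hcX
      have hXp := hne.card_pos
      have hdisj : Disjoint (X.erase c) (R \ S) := by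
        rw [Finset.disjoint_left]
        intro b hb hb2
        rw [mem_erase] at hb
        exact (mem_sdiff.1 hb2).2 ((mem_insert.1 (hX hb.2)).resolve_left hb.1)
      have hcu := card_union_of_disjoint hdisj
      rw [card_erase_of_mem hcX] at hcu
      have hsub : X.erase c ∪ (R \ S) ⊆ R := by
        refine union_subset (fun b hb => ?_) sdiff_subset
        rw [mem_erase] at hb
        exact hSR ((mem_insert.1 (hX hb.2)).resolve_left hb.1)
      have htight : Tight (pat s) R C (X.erase c ∪ (R \ S)) := by
        by_contra hnt
        have := not_tight_card hE hsub ⟨c, mem_union_right _ hc⟩ (by omega) hnt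
        omega
      have h5 := hA _ (tight_trans hE htight).2
      rw [card_sdiff_of_subset (nb_sub _ _ _), htight.2.2.2] at h5
      omega
    · have hXS : X ⊆ S := fun b hb => (mem_insert.1 (hX hb)).resolve_left (fun h => hcX (h ▸ hb))
      rw [g1_nb rfl h11 hXS]
      refine not_tight_card hE (hXS.trans hSR) hne (by omega) (fun htt => ?_)
      have := hB X htt
      omega
  have hmain := thmE _ s1 _ _ rfl hpf1 hbr (by omega)
  rw [ec_insert_left _ _ hcS, ec_congr h11, ← ec_nb] at hmain
  have h1 : 0 < ((nb (pat s) C S).filter (fun a => pat s1 c a)).card :=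
    card_pos.2 ⟨t, mem_filter.2 ⟨ht, (h12 t ht).2 ⟨c, hc, hct⟩⟩⟩
  have h2 : ec (pat s) S C = ∑ b ∈ S, k := sum_congr rfl (fun b hb => hdeg b (hSR hb))
  rw [sum_const, smul_eq_mul] at h2
  have := Nat.mul_le_mul_left S.card hk
  omega

theorem thmK {s : B → A → ℝ} {R : Finset B} {C : Finset A} {k : ℕ} (hk : 4 ≤ k) (hPf : Pf s R C)
    (hE : Elem (pat s) R C) (h2 : 2 ≤ R.card)
    (hdeg : ∀ b ∈ R, (C.filter (fun a => pat s b a)).card = k)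
    (hdeg' : ∀ a ∈ C, (R.filter (fun b => pat s b a)).card = k) : False := by
  by_cases hex : ∃ m, (∃ S, Tight (pat s) R C S ∧ S.card = m) ∨
      ∃ Y, Tight (fun a b => pat s b a) C R Y ∧ Y.card = m
  · have hmin := fun m => @Nat.find_min' _ (Classical.decPred _) hex m
    have hsp := @Nat.find_spec _ (Classical.decPred _) hex
    have hCne : Nonempty A := by
      obtain ⟨a, _⟩ : C.Nonempty := by rw [← card_pos, ← hE.1]; omega
      exact ⟨a⟩
    rcases hsp with ⟨S, hS, hm⟩ | ⟨Y, hY, hm⟩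
    · refine thmKA hk hPf hE hdeg hS (fun X hX => ?_) (fun Y hY => ?_)
      · rw [hm]; exact hmin _ (Or.inl ⟨X, hX, rfl⟩)
      · rw [hm]; exact hmin _ (Or.inr ⟨Y, hY, rfl⟩)
    · refine thmKA (s := fun a b => s b a) hk (hPf.transpose hCne hE.1) hE.transpose hdeg' hY (fun X hX => ?_) (fun Y hY => ?_)
      · rw [hm]; exact hmin _ (Or.inr ⟨X, hX, rfl⟩)
      · rw [hm]; exact hmin _ (Or.inl ⟨Y, hY, rfl⟩)
  · have hbr : Brace (pat s) R C :=
      ⟨hE.1, fun X hX hne hle => not_tight_card hE hX hne hle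
        (fun ht => hex ⟨_, Or.inl ⟨X, ht, rfl⟩⟩)⟩
    have hmain := thmE _ s _ _ rfl hPf hbr h2
    have h2 : ec (pat s) R C = ∑ b ∈ R, k := sum_congr rfl (fun b hb => hdeg b hb)
    rw [sum_const, smul_eq_mul] at h2
    have := Nat.mul_le_mul_left R.card hk
    omega

end TFH

namespace TFH
open Finset
open scoped Classical
set_option linter.all false

section
variable {B : Type*} [Fintype B]

/-- row degree and column degree -/
noncomputable def rd (P : B → B → Prop) (b : B) : ℕ := (univ.filter (fun a => P b a)).card
noncomputable def cd (P : B → B → Prop) (a : B) : ℕ := (univ.filter (fun b => P b a)).card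

def IsPM (P : B → B → Prop) (σ : Equiv.Perm B) : Prop := ∀ b, P b (σ b)

theorem av {P : B → B → Prop} {d : ℕ} (hd : 2 ≤ d) (v0 : B) (hr : ∀ b, b ≠ v0 → d ≤ rd P b)
    (hr0 : d ≤ rd P v0 + 1) (hc : ∀ a, cd P a ≤ d) : ∃ σ : Equiv.Perm B, IsPM P σ := by
  have hPM : PM P (univ : Finset B) univ := by
    apply hall ⟨v0⟩
    intro X _
    have h1 : ec P X univ = ec P X (nb P univ X) := ec_nb _ _ _
    have h2 : ec P X (nb P univ X) ≤ ∑ t ∈ nb P univ X, d := by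
      rw [ec_comm]
      refine sum_le_sum (fun a _ => (card_le_card ?_).trans (hc a))
      exact filter_subset_filter _ (subset_univ _)
    have h3 : ∑ b ∈ X, d ≤ ec P X univ + 1 := by
      have e : ec P X univ = ∑ b ∈ X, rd P b := rfl
      rw [e]
      by_cases hv : v0 ∈ X
      · rw [← add_sum_erase X _ hv, ← add_sum_erase X (fun b => rd P b) hv]
        have : ∑ b ∈ X.erase v0, d ≤ ∑ b ∈ X.erase v0, rd P b :=
          sum_le_sum (fun b hb => hr b (mem_erase.1 hb).1)
        omega
      · have : ∑ b ∈ X, d ≤ ∑ b ∈ X, rd P b :=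
          sum_le_sum (fun b hb => hr b (fun h => hv (h ▸ hb)))
        omega
    rw [sum_const, smul_eq_mul] at h2 h3
    by_contra hlt
    push Not at hlt
    have h4 : ((nb P univ X).card + 1) * d ≤ X.card * d := Nat.mul_le_mul_right d hlt
    rw [add_mul] at h4
    omega
  obtain ⟨e, he, h⟩ := hPM
  have hinj : Function.Injective e := fun x y hxy => he (by simp) (by simp) hxy
  exact ⟨Equiv.ofBijective e (Finite.injective_iff_bijective.1 hinj), fun b => (h b (mem_univ _)).2⟩

theorem rd_remove (P : B → B → Prop) (E : B → B → Prop) (b x : B) (h : ∀ a, E b a → a = x) :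
    rd P b ≤ rd (fun b a => P b a ∧ ¬ E b a) b + 1 := by
  unfold rd
  refine (card_le_card ?_).trans (card_insert_le x _)
  intro a ha
  simp only [mem_filter, mem_univ, true_and, mem_insert] at ha ⊢
  by_cases hE : E b a
  · exact Or.inl (h a hE)
  · exact Or.inr ⟨ha, hE⟩

theorem cd_remove (P : B → B → Prop) (E : B → B → Prop) (a x : B) (hP : P x a) (h : E x a) :
    cd (fun b a => P b a ∧ ¬ E b a) a + 1 ≤ cd P a := by
  unfold cd
  apply card_lt_card
  refine ⟨fun b hb => ?_, fun hh => ?_⟩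
  · simp only [mem_filter, mem_univ, true_and] at hb ⊢; exact hb.1
  · have := hh (show x ∈ univ.filter (fun b => P b a) by simp [hP])
    simp [h] at this

theorem av_perm {P : B → B → Prop} {σ : Equiv.Perm B} (hσ : IsPM P σ) :
    (∀ b, rd P b ≤ rd (fun b a => P b a ∧ ¬ (σ b = a)) b + 1) ∧
    ∀ a, cd (fun b a => P b a ∧ ¬ (σ b = a)) a + 1 ≤ cd P a := by
  refine ⟨fun b => rd_remove P (fun b a => σ b = a) b (σ b) (fun a h => h.symm), fun a => ?_⟩
  refine cd_remove P (fun b a => σ b = a) a (σ.symm a) ?_ (by simp)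
  have := hσ (σ.symm a)
  simpa using this

structure Setup (P : B → B → Prop) (k : ℕ) : Prop where
  k4 : 4 ≤ k
  ne : Nonempty B
  row : ∀ b, rd P b = k
  col : ∀ a, cd P a = k
  cyc : ∀ σ τ : Equiv.Perm B, IsPM P σ → IsPM P τ → (∀ b, σ b ≠ τ b) →
    ∀ x y, (σ⁻¹ * τ).SameCycle x y

variable {P : B → B → Prop} {k : ℕ}

theorem Setup.disj (h : Setup P k) {σ : Equiv.Perm B} (hσ : IsPM P σ) :
    ∃ τ, IsPM P τ ∧ ∀ b, σ b ≠ τ b := by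
  obtain ⟨v0⟩ := h.ne
  have h1 := av_perm hσ
  have hk := h.k4
  obtain ⟨τ, hτ⟩ := av (P := fun b a => P b a ∧ ¬ (σ b = a)) (d := k - 1) (by omega) v0
    (fun b _ => by have := h1.1 b; rw [h.row] at this; omega)
    (by have := h1.1 v0; rw [h.row] at this; omega)
    (fun a => by have := h1.2 a; rw [h.col] at this; omega)
  exact ⟨τ, fun b => (hτ b).1, fun b => (hτ b).2⟩

theorem Setup.exist (h : Setup P k) : ∃ σ, IsPM P σ := by
  obtain ⟨v0⟩ := h.ne
  have hk := h.k4
  exact av (d := k) (by omega) v0 (fun b _ => by rw [h.row]) (by rw [h.row]; omega) (fun a => by rw [h.col])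

theorem Setup.eps (h : Setup P k) {σ τ : Equiv.Perm B} (hσ : IsPM P σ) (hτ : IsPM P τ)
    (hd : ∀ b, σ b ≠ τ b) : Equiv.Perm.sign (σ⁻¹ * τ) = -(-1) ^ (Fintype.card B) := by
  have hfix : ∀ b, (σ⁻¹ * τ) b ≠ b := by
    intro b hb
    rw [Equiv.Perm.mul_apply, Equiv.Perm.inv_eq_iff_eq] at hb
    exact hd b hb.symm
  obtain ⟨v0⟩ := h.ne
  have hc : (σ⁻¹ * τ).IsCycle := ⟨v0, hfix v0, fun y _ => h.cyc σ τ hσ hτ hd v0 y⟩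
  rw [hc.sign]
  have : (σ⁻¹ * τ).support = univ := by
    ext b; simp only [Equiv.Perm.mem_support, mem_univ, iff_true]; exact hfix b
  rw [this, card_univ]

theorem Setup.eps1 (h : Setup P k) : -(-1 : ℤˣ) ^ (Fintype.card B) = 1 := by
  obtain ⟨σ, hσ⟩ := h.exist
  obtain ⟨τ, hτ, hd⟩ := h.disj hσ
  obtain ⟨v0⟩ := h.ne
  have hk := h.k4
  have h1 := av_perm hσ
  have h2 := av_perm (P := fun b a => P b a ∧ ¬ (σ b = a)) (σ := τ) (fun b => ⟨hτ b, hd b⟩)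
  obtain ⟨θ, hθ⟩ := av (P := fun b a => (P b a ∧ ¬ (σ b = a)) ∧ ¬ (τ b = a)) (d := k - 2) (by omega) v0
    (fun b _ => by have := h1.1 b; have := h2.1 b; rw [h.row] at *; omega)
    (by have := h1.1 v0; have := h2.1 v0; rw [h.row] at *; omega)
    (fun a => by have := h1.2 a; have := h2.2 a; rw [h.col] at *; omega)
  have hθP : IsPM P θ := fun b => (hθ b).1.1
  have e1 := h.eps hσ hτ hd
  have e2 := h.eps hτ hθP (fun b => (hθ b).2)
  have e3 := h.eps hσ hθP (fun b => (hθ b).1.2)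
  have e : σ⁻¹ * θ = (σ⁻¹ * τ) * (τ⁻¹ * θ) := by group
  rw [e, Equiv.Perm.sign_mul, e1, e2] at e3
  exact mul_eq_left.1 e3

theorem Setup.sgn (h : Setup P k) {σ τ : Equiv.Perm B} (hσ : IsPM P σ) (hτ : IsPM P τ)
    (hd : ∀ b, σ b ≠ τ b) : Equiv.Perm.sign σ = Equiv.Perm.sign τ := by
  have := h.eps hσ hτ hd
  rw [h.eps1, Equiv.Perm.sign_mul, Equiv.Perm.sign_inv] at this
  have h2 := Int.units_mul_self (Equiv.Perm.sign σ)
  exact (mul_left_cancel (this.trans h2.symm)).symm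

/-- the mixed edge set -/
def EX (σ τ : Equiv.Perm B) (v0 : B) (X : Set B) (a b : B) : Prop :=
  (a ∈ X ∧ b = τ a) ∨ ((a ∉ X ∨ a = v0) ∧ b = σ a)

theorem Setup.step (h : Setup P k) {σ τ θ : Equiv.Perm B} (hσ : IsPM P σ) (hτ : IsPM P τ)
    (hθ : IsPM P θ) {v0 : B} {X : Set B} (hX : ∀ a ∈ X, a ≠ v0 → (σ⁻¹ * τ)⁻¹ a ∈ X)
    (hav : ∀ b, ¬ EX σ τ v0 X b (θ b)) :
    ∃ θ2 : Equiv.Perm B, IsPM P θ2 ∧ (∀ b, ¬ EX σ τ v0 X b (θ2 b)) ∧ ∀ b, θ b ≠ θ2 b := by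
  have hk := h.k4
  have h1 := av_perm hθ
  set Q : B → B → Prop := fun b a => P b a ∧ ¬ (θ b = a) with hQ
  have hcol : ∀ a, cd (fun b a => Q b a ∧ ¬ EX σ τ v0 X b a) a + 1 ≤ cd Q a := by
    intro a
    obtain ⟨b, hP, hE⟩ : ∃ b, P b a ∧ EX σ τ v0 X b a := by
      by_cases hh : σ⁻¹ a ∈ X ∧ σ⁻¹ a ≠ v0
      · have h2 := hX _ hh.1 hh.2
        have e : τ ((σ⁻¹ * τ)⁻¹ (σ⁻¹ a)) = a := by simp
        refine ⟨(σ⁻¹ * τ)⁻¹ (σ⁻¹ a), ?_, Or.inl ⟨h2, e.symm⟩⟩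
        have := hτ ((σ⁻¹ * τ)⁻¹ (σ⁻¹ a))
        rwa [e] at this
      · refine ⟨σ⁻¹ a, ?_, Or.inr ⟨by tauto, by simp⟩⟩
        have := hσ (σ⁻¹ a)
        simpa using this
    exact cd_remove Q (EX σ τ v0 X) a b ⟨hP, fun hh => hav b (by rw [hh]; exact hE)⟩ hE
  have hrow : ∀ b, b ≠ v0 → rd Q b ≤ rd (fun b a => Q b a ∧ ¬ EX σ τ v0 X b a) b + 1 := by
    intro b hb
    refine rd_remove Q (EX σ τ v0 X) b (if b ∈ X then τ b else σ b) ?_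
    intro a ha
    unfold EX at ha
    split_ifs with hbX <;> tauto
  have hrow0 : rd Q v0 ≤ rd (fun b a => Q b a ∧ ¬ EX σ τ v0 X b a) v0 + 2 := by
    have r1 := rd_remove Q (fun b a => a = τ b) v0 (τ v0) (fun a h => h)
    have r2 := rd_remove (fun b a => Q b a ∧ ¬ (a = τ b)) (fun b a => a = σ b) v0 (σ v0) (fun a h => h)
    have r3 : rd (fun b a => (Q b a ∧ ¬ (a = τ b)) ∧ ¬ (a = σ b)) v0 ≤
        rd (fun b a => Q b a ∧ ¬ EX σ τ v0 X b a) v0 := by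
      unfold rd
      apply card_le_card
      intro a ha
      simp only [mem_filter, mem_univ, true_and] at ha ⊢
      refine ⟨ha.1.1, ?_⟩
      unfold EX
      tauto
    omega
  obtain ⟨θ2, h2⟩ := av (P := fun b a => Q b a ∧ ¬ EX σ τ v0 X b a) (d := k - 2) (by omega) v0
    (fun b hb => by have := h1.1 b; have := hrow b hb; rw [h.row] at *; omega)
    (by have := h1.1 v0; rw [h.row] at *; omega)
    (fun a => by have := h1.2 a; have := hcol a; rw [h.col] at *; omega)
  exact ⟨θ2, fun b => (h2 b).1.1, fun b => (h2 b).2, fun b => (h2 b).1.2⟩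

theorem Setup.inv (h : Setup P k) {σ τ : Equiv.Perm B} (hσ : IsPM P σ) (hτ : IsPM P τ)
    (v0 : B) (j : ℕ) : ∃ θ, IsPM P θ ∧ Equiv.Perm.sign θ = Equiv.Perm.sign σ ∧
      ∀ b, ¬ EX σ τ v0 {x | ∃ i < j, ((σ⁻¹ * τ) ^ i) v0 = x} b (θ b) := by
  induction j with
  | zero =>
    obtain ⟨θ, hθ, hd⟩ := h.disj hσ
    refine ⟨θ, hθ, (h.sgn hσ hθ hd).symm, fun b hE => ?_⟩
    have := hd b
    simp [EX] at hE
    exact this hE.symm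
  | succ j ih =>
    obtain ⟨θ, hθ, hs, hav⟩ := ih
    have key : ∀ θ' : Equiv.Perm B,
        (∀ b, ¬ EX σ τ v0 {x | ∃ i < j, ((σ⁻¹ * τ) ^ i) v0 = x} b (θ' b)) →
        θ' (((σ⁻¹ * τ) ^ j) v0) ≠ τ (((σ⁻¹ * τ) ^ j) v0) →
        ∀ b, ¬ EX σ τ v0 {x | ∃ i < j + 1, ((σ⁻¹ * τ) ^ i) v0 = x} b (θ' b) := by
      intro θ' h1 h2 b hE
      rcases hE with ⟨⟨i, hi, hb⟩, he⟩ | ⟨hn, he⟩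
      · by_cases hij : i = j
        · subst hij; rw [← hb] at he; exact h2 he
        · exact h1 b (Or.inl ⟨⟨i, by omega, hb⟩, he⟩)
      · refine h1 b (Or.inr ⟨hn.imp (fun hn hh => hn ?_) id, he⟩)
        obtain ⟨i, hi, hb⟩ := hh
        exact ⟨i, by omega, hb⟩
    by_cases hc : θ (((σ⁻¹ * τ) ^ j) v0) = τ (((σ⁻¹ * τ) ^ j) v0)
    · obtain ⟨θ2, h1, h2, h3⟩ := h.step hσ hτ hθ (v0 := v0)
        (X := {x | ∃ i < j, ((σ⁻¹ * τ) ^ i) v0 = x}) (by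
          rintro a ⟨i, hi, ha⟩ hne
          obtain _ | i := i
          · exact absurd ha.symm (by simpa using hne)
          · refine ⟨i, by omega, ?_⟩
            rw [← ha, pow_succ', Equiv.Perm.mul_apply]; exact ((Equiv.Perm.inv_eq_iff_eq).2 rfl).symm) hav
      refine ⟨θ2, h1, (h.sgn hθ h1 h3).symm.trans hs, key θ2 h2 ?_⟩
      rw [← hc]
      exact (h3 _).symm
    · exact ⟨θ, hθ, hs, key θ hav hc⟩

theorem Setup.swap (h : Setup P k) {σ τ : Equiv.Perm B} (hσ : IsPM P σ) (hτ : IsPM P τ)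
    (v0 : B) : ∃ σ', IsPM P σ' ∧ Equiv.Perm.sign σ' = Equiv.Perm.sign σ ∧ σ' v0 = τ v0 ∧
      ∀ b, σ' b = τ b ∨ σ' b = σ b := by
  have hval : ∀ b, (σ * (σ⁻¹ * τ).cycleOf v0) b =
      if (σ⁻¹ * τ).SameCycle v0 b then τ b else σ b := by
    intro b
    rw [Equiv.Perm.mul_apply, Equiv.Perm.cycleOf_apply]
    split_ifs <;> simp
  have hPM : IsPM P (σ * (σ⁻¹ * τ).cycleOf v0) := by
    intro b; rw [hval]; split_ifs
    · exact hτ b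
    · exact hσ b
  obtain ⟨θ, hθ, hs, hav⟩ := h.inv hσ hτ v0 (orderOf (σ⁻¹ * τ))
  refine ⟨σ * (σ⁻¹ * τ).cycleOf v0, hPM, ?_, ?_, ?_⟩
  · refine (h.sgn hPM hθ (fun b hb => hav b ?_)).trans hs
    rw [← hb, hval]
    split_ifs with hc
    · obtain ⟨i, hi⟩ := hc.exists_nat_pow_eq
      refine Or.inl ⟨⟨i % orderOf (σ⁻¹ * τ), Nat.mod_lt _ (orderOf_pos _), ?_⟩, rfl⟩
      rw [pow_mod_orderOf, hi]
    · refine Or.inr ⟨Or.inl ?_, rfl⟩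
      rintro ⟨i, _, hi⟩
      exact hc ⟨i, by simpa using hi⟩
  · rw [hval, if_pos (Equiv.Perm.SameCycle.refl _ _)]
  · intro b; rw [hval]; split_ifs <;> simp

theorem Setup.sign_eq (h : Setup P k) {τ : Equiv.Perm B} (hτ : IsPM P τ) (m : ℕ) :
    ∀ σ : Equiv.Perm B, IsPM P σ → (univ.filter (fun b => σ b ≠ τ b)).card = m →
      Equiv.Perm.sign σ = Equiv.Perm.sign τ := by
  induction m using Nat.strong_induction_on with
  | _ m ih =>
  intro σ hσ hm
  by_cases he : σ = τ
  · rw [he]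
  obtain ⟨v0, hv⟩ : ∃ v0, σ v0 ≠ τ v0 := by
    by_contra hcon
    push Not at hcon
    exact he (Equiv.ext hcon)
  obtain ⟨σ', h1, h2, h3, h4⟩ := h.swap hσ hτ v0
  rw [← h2]
  refine ih _ ?_ σ' h1 rfl
  rw [← hm]
  apply card_lt_card
  refine ⟨fun b hb => ?_, fun hh => ?_⟩
  · simp only [mem_filter, mem_univ, true_and] at hb ⊢
    rcases h4 b with h | h
    · exact absurd h hb
    · rwa [← h]
  · have := hh (show v0 ∈ univ.filter (fun b => σ b ≠ τ b) by simp [hv])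
    simp [h3] at this

noncomputable def ind (P : B → B → Prop) : B → B → ℝ := fun b a => if P b a then 1 else 0

theorem pat_ind : pat (ind P) = P := by
  ext b a; unfold pat ind; split_ifs with h <;> simp [h]

theorem Setup.pf (h : Setup P k) : Pf (ind P) (univ : Finset B) univ := by
  intro w hw hPM v hv
  obtain ⟨e, he, hP⟩ := hPM
  have hinj : Function.Injective e := fun x y hxy => he (by simp) (by simp) hxy
  set τ : Equiv.Perm B := Equiv.ofBijective e (Finite.injective_iff_bijective.1 hinj) with hτd
  have hτe : ∀ b, τ b = e b := fun b => rfl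
  have hτ : IsPM P τ := by
    intro b
    have := (hP b (mem_univ _)).2.2
    rw [hτe]
    by_contra hn
    simp [ind, hn] at this
  set M : Matrix B B ℝ := Matrix.of (fun b a => w b a * ind P b a) with hM
  have hM0 : ∀ b a, 0 ≤ M b a := by
    intro b a
    refine mul_nonneg (hw b a) ?_
    unfold ind; split_ifs <;> norm_num
  have hdet : M.det ≠ 0 := by
    rw [← Matrix.det_transpose, Matrix.det_apply]
    have e1 : ∀ σ : Equiv.Perm B, Equiv.Perm.sign σ • ∏ i, M.transpose (σ i) i =
        Equiv.Perm.sign τ • ∏ i, M i (σ i) := by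
      intro σ
      by_cases hσ : IsPM P σ
      · rw [h.sign_eq hτ _ σ hσ rfl]; rfl
      · unfold IsPM at hσ
        push Not at hσ
        obtain ⟨b, hb⟩ := hσ
        have : ∏ i, M i (σ i) = 0 := prod_eq_zero (mem_univ b) (by simp [hM, ind, hb])
        show Equiv.Perm.sign σ • ∏ i, M i (σ i) = _
        rw [this]; simp
    rw [sum_congr rfl (fun σ _ => e1 σ), ← smul_sum]
    have hpos : 0 < ∑ σ : Equiv.Perm B, ∏ i, M i (σ i) := by
      refine sum_pos' (fun σ _ => prod_nonneg (fun i _ => hM0 _ _)) ⟨τ, mem_univ _, ?_⟩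
      refine prod_pos (fun i _ => lt_of_le_of_ne (hM0 _ _) (Ne.symm ?_))
      have := (hP i (mem_univ _)).2
      exact mul_ne_zero this.1 this.2
    intro h0
    rcases Int.units_eq_one_or (Equiv.Perm.sign τ) with hs | hs <;> rw [hs] at h0 <;>
      simp at h0 <;> linarith
  have := Matrix.eq_zero_of_mulVec_eq_zero hdet (v := v) (by
    ext b
    exact hv b (mem_univ _))
  intro a _
  rw [this]; rfl

theorem Setup.elem (h : Setup P k) : Elem P (univ : Finset B) univ := by
  refine ⟨rfl, fun S _ hne hlt => ?_⟩
  obtain ⟨σ, hσ⟩ := h.exist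
  obtain ⟨τ, hτ, hd⟩ := h.disj hσ
  by_contra hcon
  have key : ∀ σ : Equiv.Perm B, IsPM P σ → S.image σ = nb P univ S := by
    intro σ hσ
    apply eq_of_subset_of_card_le
    · intro a ha
      obtain ⟨b, hb, rfl⟩ := mem_image.1 ha
      exact mem_nb.2 ⟨mem_univ _, b, hb, hσ b⟩
    · rw [card_image_of_injective _ σ.injective]; omega
  have hinv : ∀ b ∈ S, (σ⁻¹ * τ) b ∈ S := by
    intro b hb
    have h1 : τ b ∈ S.image σ := by
      rw [key σ hσ, ← key τ hτ]; exact mem_image_of_mem _ hb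
    obtain ⟨c, hc, he⟩ := mem_image.1 h1
    have e2 : σ⁻¹ (σ c) = c := (Equiv.Perm.inv_eq_iff_eq).2 rfl
    rw [Equiv.Perm.mul_apply, ← he, e2]
    exact hc
  obtain ⟨x, hx⟩ := hne
  have hall : ∀ y, y ∈ S := by
    intro y
    obtain ⟨i, hi⟩ := (h.cyc σ τ hσ hτ hd x y).exists_nat_pow_eq
    rw [← hi]
    clear hi
    induction i with
    | zero => simpa using hx
    | succ i ih => rw [pow_succ', Equiv.Perm.mul_apply]; exact hinv _ ih
  rw [eq_univ_iff_forall.2 hall] at hlt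
  omega

theorem Setup.false (h : Setup P k) : False := by
  have hk := h.k4
  refine thmK (s := ind P) (R := univ) (C := univ) hk h.pf (by rw [pat_ind]; exact h.elem) ?_ ?_ ?_
  · obtain ⟨v0⟩ := h.ne
    have := h.row v0
    have h2 : rd P v0 ≤ (univ : Finset B).card := card_le_card (subset_univ _)
    omega
  · intro b _; rw [pat_ind]; exact h.row b
  · intro a _; rw [pat_ind]; exact h.col a

end
end TFH

namespace TFH
open Finset
open scoped Classical
set_option linter.all false

section
variable {V B : Type*} {i j : B → V}

def unionG (i j : B → V) (hij : ∀ b c, i b ≠ j c) (σ τ : Equiv.Perm B) : SimpleGraph V where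
  Adj u v := (∃ b, u = i b ∧ (v = j (σ b) ∨ v = j (τ b))) ∨ (∃ b, v = i b ∧ (u = j (σ b) ∨ u = j (τ b)))
  symm := ⟨fun u v h => h.symm⟩
  loopless := ⟨fun u h => by
    rcases h with ⟨b, h1, h2 | h2⟩ | ⟨b, h1, h2 | h2⟩ <;> exact hij _ _ (h1.symm.trans h2)⟩

theorem unionG_i (hi : Function.Injective i) (hij : ∀ b c, i b ≠ j c) (σ τ : Equiv.Perm B) (b : B) :
    (unionG i j hij σ τ).neighborSet (i b) = {j (σ b), j (τ b)} := by
  ext v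
  simp only [SimpleGraph.mem_neighborSet, Set.mem_insert_iff, Set.mem_singleton_iff]
  constructor
  · rintro (⟨c, h1, h2⟩ | ⟨c, h1, h2 | h2⟩)
    · rw [hi h1]; exact h2
    · exact absurd h2 (hij _ _)
    · exact absurd h2 (hij _ _)
  · intro h; exact Or.inl ⟨b, rfl, h⟩

theorem unionG_j (hj : Function.Injective j) (hij : ∀ b c, i b ≠ j c) (σ τ : Equiv.Perm B) (c : B) :
    (unionG i j hij σ τ).neighborSet (j c) = {i (σ⁻¹ c), i (τ⁻¹ c)} := by
  ext v
  simp only [SimpleGraph.mem_neighborSet, Set.mem_insert_iff, Set.mem_singleton_iff]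
  constructor
  · rintro (⟨b, h1, h2⟩ | ⟨b, h1, h2 | h2⟩)
    · exact absurd h1.symm (hij _ _)
    · left; rw [h1, hj h2]; simp
    · right; rw [h1, hj h2]; simp
  · rintro (h | h)
    · exact Or.inr ⟨_, h, Or.inl (by simp)⟩
    · exact Or.inr ⟨_, h, Or.inr (by simp)⟩

theorem final [Fintype B] (hi : Function.Injective i) (hj : Function.Injective j)
    (hij : ∀ b c, i b ≠ j c) (hcov : ∀ v, (∃ b, v = i b) ∨ ∃ c, v = j c)
    (G : SimpleGraph V) (hGi : ∀ b c, ¬ G.Adj (i b) (i c)) (hGj : ∀ b c, ¬ G.Adj (j b) (j c))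
    (hne : Nonempty B) (k : ℕ) (hk : 4 ≤ k) (hreg : ∀ v : V, (G.neighborSet v).ncard = k)
    (h2 : ∀ F, IsTwoFactor G F → F.Connected) : False := by
  have hS : Setup (fun b c => G.Adj (i b) (j c)) k := by
    refine ⟨hk, hne, fun b => ?_, fun c => ?_, fun σ τ hσ hτ hd x y => ?_⟩
    · rw [← hreg (i b)]
      have e : G.neighborSet (i b) = j '' ((univ.filter (fun c => G.Adj (i b) (j c)) : Finset B) : Set B) := by
        ext v
        simp only [SimpleGraph.mem_neighborSet, Set.mem_image, mem_coe, mem_filter, mem_univ, true_and]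
        constructor
        · intro hv
          rcases hcov v with ⟨c, rfl⟩ | ⟨c, rfl⟩
          · exact absurd hv (hGi _ _)
          · exact ⟨c, hv, rfl⟩
        · rintro ⟨c, hc, rfl⟩; exact hc
      rw [e, Set.ncard_image_of_injective _ hj, Set.ncard_coe_finset]
      rfl
    · rw [← hreg (j c)]
      have e : G.neighborSet (j c) = i '' ((univ.filter (fun b => G.Adj (i b) (j c)) : Finset B) : Set B) := by
        ext v
        simp only [SimpleGraph.mem_neighborSet, Set.mem_image, mem_coe, mem_filter, mem_univ, true_and]
        constructor
        · intro hv
          rcases hcov v with ⟨b, rfl⟩ | ⟨b, rfl⟩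
          · exact ⟨b, hv.symm, rfl⟩
          · exact absurd hv (hGj _ _)
        · rintro ⟨b, hb, rfl⟩; exact hb.symm
      rw [e, Set.ncard_image_of_injective _ hi, Set.ncard_coe_finset]
      rfl
    · have hF : IsTwoFactor G (unionG i j hij σ τ) := by
        refine ⟨?_, fun v => ?_⟩
        · intro u v huv
          rcases huv with ⟨b, h1, h2 | h2⟩ | ⟨b, h1, h2 | h2⟩
          · rw [h1, h2]; exact hσ b
          · rw [h1, h2]; exact hτ b
          · rw [h1, h2]; exact (hσ b).symm
          · rw [h1, h2]; exact (hτ b).symm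
        · rcases hcov v with ⟨b, rfl⟩ | ⟨c, rfl⟩
          · rw [unionG_i hi, Set.ncard_pair (fun h => hd b (hj h))]
          · rw [unionG_j hj, Set.ncard_pair (fun h => hd (σ⁻¹ c) ?_)]
            have h1 := hi h
            have e1 : σ (σ⁻¹ c) = c := by simp
            have e2 : τ (τ⁻¹ c) = c := by simp
            rw [e1, h1, e2]
      have hcon := (h2 _ hF).preconnected (i x) (i y)
      have hclosed : ∀ u v, (unionG i j hij σ τ).Adj u v →
          (∃ z, (σ⁻¹ * τ).SameCycle x z ∧ (u = i z ∨ u = j (σ z))) →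
          ∃ z, (σ⁻¹ * τ).SameCycle x z ∧ (v = i z ∨ v = j (σ z)) := by
        rintro u v huv ⟨z, hz, rfl | rfl⟩
        · rcases huv with ⟨b, h1, h2 | h2⟩ | ⟨b, h1, h2 | h2⟩
          · rw [← hi h1] at h2
            exact ⟨z, hz, Or.inr h2⟩
          · rw [← hi h1] at h2
            exact ⟨(σ⁻¹ * τ) z, Equiv.Perm.sameCycle_apply_right.2 hz, Or.inr (by simpa using h2)⟩
          · exact absurd h2 (hij _ _)
          · exact absurd h2 (hij _ _)
        · rcases huv with ⟨b, h1, _⟩ | ⟨b, h1, h2 | h2⟩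
          · exact absurd h1.symm (hij _ _)
          · have := σ.injective (hj h2)
            exact ⟨z, hz, Or.inl (by rw [h1, this])⟩
          · have h3 := hj h2
            refine ⟨b, (Equiv.Perm.sameCycle_apply_right (f := σ⁻¹ * τ)).1 ?_, Or.inl h1⟩
            have : (σ⁻¹ * τ) b = z := by
              rw [Equiv.Perm.mul_apply, ← h3]; simp
            rw [this]; exact hz
      have hwalk : ∀ u v, (unionG i j hij σ τ).Walk u v →
          (∃ z, (σ⁻¹ * τ).SameCycle x z ∧ (u = i z ∨ u = j (σ z))) →
          ∃ z, (σ⁻¹ * τ).SameCycle x z ∧ (v = i z ∨ v = j (σ z)) := by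
        intro u v p
        induction p with
        | nil => exact id
        | cons h p ih => exact fun hh => ih (hclosed _ _ h hh)
      obtain ⟨p⟩ := hcon
      obtain ⟨z, hz, h | h⟩ := hwalk _ _ p ⟨x, Equiv.Perm.SameCycle.refl _ _, Or.inl rfl⟩
      · rw [hi h]; exact hz
      · exact absurd h (hij _ _)
  exact hS.false

end

theorem balanced {V : Type*} [Fintype V] (G : SimpleGraph V) (k : ℕ) (hk : 1 ≤ k)
    (hreg : ∀ v : V, (G.neighborSet v).ncard = k) (c : G.Coloring (Fin 2)) :
    (univ.filter (fun v => c v = 0)).card = (univ.filter (fun v => c v = 1)).card := by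
  have key : ∀ p q : Fin 2, p ≠ q → ∀ v, c v = p →
      ((univ.filter (fun v => c v = q)).filter (fun w => G.Adj v w)).card = k := by
    intro p q hpq v hv
    rw [← hreg v, ← Set.ncard_coe_finset]
    congr 1
    ext w
    simp only [coe_filter, mem_filter, mem_univ, true_and, Set.mem_setOf_eq, SimpleGraph.mem_neighborSet]
    constructor
    · exact fun h => h.2
    · intro h
      refine ⟨?_, h⟩
      have := c.valid h
      omega
  have h1 : ec (fun v w => G.Adj v w) (univ.filter (fun v => c v = 0)) (univ.filter (fun v => c v = 1)) =
      ∑ v ∈ univ.filter (fun v => c v = 0), k :=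
    sum_congr rfl (fun v hv => key 0 1 (by decide) v (mem_filter.1 hv).2)
  have h2 : ec (fun v w => G.Adj v w) (univ.filter (fun v => c v = 0)) (univ.filter (fun v => c v = 1)) =
      ∑ v ∈ univ.filter (fun v => c v = 1), k := by
    rw [ec_comm]
    refine sum_congr rfl (fun v hv => ?_)
    rw [← key 1 0 (by decide) v (mem_filter.1 hv).2]
    congr 1
    exact filter_congr (fun w _ => G.adj_comm w v)
  rw [h1, sum_const, sum_const, smul_eq_mul, smul_eq_mul] at h2
  exact Nat.eq_of_mul_eq_mul_right (by omega) h2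

end TFH

/-- a 2-factor Hamiltonian `k`-regular bipartite graph has `k ≤ 3`. -/
theorem stmt_3 {V : Type*} [Fintype V] (G : SimpleGraph V) (k : ℕ) (hk : 1 ≤ k)
    (hreg : ∀ v : V, (G.neighborSet v).ncard = k)
    (hbip : G.Colorable 2)
    (h2fh : TwoFactorHamiltonian G) :
    k ≤ 3 := by
  classical
  by_contra hk4
  obtain ⟨c⟩ := hbip
  have hbal := TFH.balanced G k hk hreg c
  have hcard : Fintype.card {v // c v = 0} = Fintype.card {v // c v = 1} := by
    rw [Fintype.card_subtype, Fintype.card_subtype]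
    convert hbal
  let e : {v // c v = 0} ≃ {v // c v = 1} := Fintype.equivOfCardEq hcard
  have hcov : ∀ v, (∃ b : {v // c v = 0}, v = b.1) ∨ ∃ d : {v // c v = 0}, v = (e d).1 := by
    intro v
    by_cases h : c v = 0
    · exact Or.inl ⟨⟨v, h⟩, rfl⟩
    · have h1 : c v = 1 := by omega
      exact Or.inr ⟨e.symm ⟨v, h1⟩, by simp⟩
  obtain ⟨F, hF⟩ := h2fh.1
  obtain ⟨v⟩ := (h2fh.2 F hF).nonempty
  have hne : Nonempty {v // c v = 0} := by
    rcases hcov v with ⟨b, _⟩ | ⟨b, _⟩ <;> exact ⟨b⟩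
  refine TFH.final (i := fun b : {v // c v = 0} => b.1) (j := fun b => (e b).1) Subtype.val_injective
    (Subtype.val_injective.comp e.injective) ?_ hcov G ?_ ?_ hne k (by omega) hreg h2fh.2
  · intro b d h
    have h1 := b.2
    have h2 := (e d).2
    rw [← h, h1] at h2
    exact absurd h2 (by decide)
  · intro b d h
    exact c.valid h (b.2.trans d.2.symm)
  · intro b d h
    exact c.valid h ((e b).2.trans (e d).2.symm)
end

section
/- Let G be a cubic graph with the Perfect-Matching-Hamiltonian property (G need not be bipartite). Then G is not 2-factor Hamiltonian if and only if G admits a perfect matching M that can be extended to a Hamiltonian cycle in exactly one way, i.e., there is exactly one perfect matching N of G such that M ∪ N induces a Hamiltonian cycle of G. -/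
open SimpleGraph

/-- A 1-factor (perfect matching) of `G`: a 1-regular spanning subgraph, given as a
simple graph `F ≤ G` in which every vertex has exactly one neighbour. -/
def IsOneFactor {V : Type*} (G F : SimpleGraph V) : Prop :=
  F ≤ G ∧ ∀ v : V, (F.neighborSet v).ncard = 1

/-- `H` is a Hamiltonian cycle of `G`: a connected 2-regular spanning subgraph. -/
def IsHamiltonianCycleOf {V : Type*} (G H : SimpleGraph V) : Prop :=
  IsTwoFactor G H ∧ H.Connected

/-- `G` has the Perfect-Matching-Hamiltonian property: it admits a perfect matching,
and every perfect matching `M` of `G` can be extended to a Hamiltonian cycle of `G` by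
a perfect matching `N`, i.e. `M ∪ N` is a Hamiltonian cycle of `G`. -/
def HasPMHProperty {V : Type*} (G : SimpleGraph V) : Prop :=
  (∃ M, IsOneFactor G M) ∧
    ∀ M, IsOneFactor G M → ∃ N, IsOneFactor G N ∧ IsHamiltonianCycleOf G (M ⊔ N)

theorem aux_disj {V : Type*} {G M N : SimpleGraph V} (hM : IsOneFactor G M)
    (hN : IsOneFactor G N) (h : IsTwoFactor G (M ⊔ N)) (v w : V) (h1 : M.Adj v w)
    (h2 : N.Adj v w) : False := by
  have h3 := h.2 v
  obtain ⟨a, ha⟩ := Set.ncard_eq_one.1 (hM.2 v)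
  obtain ⟨b, hb⟩ := Set.ncard_eq_one.1 (hN.2 v)
  have e : (M ⊔ N).neighborSet v = M.neighborSet v ∪ N.neighborSet v := by
    ext x; simp
  have hwa : w ∈ M.neighborSet v := h1
  have hwb : w ∈ N.neighborSet v := h2
  rw [ha] at hwa
  rw [hb] at hwb
  rw [e, ha, hb, ← Set.mem_singleton_iff.1 hwa, ← Set.mem_singleton_iff.1 hwb] at h3
  simp at h3

theorem aux_sup {V : Type*} {G M N : SimpleGraph V} (hM : IsOneFactor G M)
    (hN : IsOneFactor G N) (hd : ∀ v w, M.Adj v w → N.Adj v w → False) :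
    IsTwoFactor G (M ⊔ N) := by
  refine ⟨sup_le hM.1 hN.1, fun v => ?_⟩
  obtain ⟨a, ha⟩ := Set.ncard_eq_one.1 (hM.2 v)
  obtain ⟨b, hb⟩ := Set.ncard_eq_one.1 (hN.2 v)
  have e : (M ⊔ N).neighborSet v = M.neighborSet v ∪ N.neighborSet v := by
    ext x; simp
  have hma : a ∈ M.neighborSet v := by rw [ha]; rfl
  have hnb : b ∈ N.neighborSet v := by rw [hb]; rfl
  have hab : a ≠ b := by
    rintro rfl
    exact hd v a hma hnb
  rw [e, ha, hb, Set.singleton_union, Set.ncard_pair hab]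

theorem aux_compl {V : Type*} [Fintype V] {G F : SimpleGraph V}
    (hcubic : ∀ v : V, (G.neighborSet v).ncard = 3) (hF : IsTwoFactor G F) :
    IsOneFactor G (G \ F) := by
  refine ⟨sdiff_le, fun v => ?_⟩
  have e : (G \ F).neighborSet v = G.neighborSet v \ F.neighborSet v := by
    ext x; simp
  have hs : F.neighborSet v ⊆ G.neighborSet v := fun x hx => hF.1 hx
  rw [e, Set.ncard_sdiff hs (Set.toFinite _), hcubic v, hF.2 v]

theorem aux_unique {V : Type*} {G K : SimpleGraph V} (hK : IsOneFactor G K) {v a b : V}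
    (ha : K.Adj v a) (hb : K.Adj v b) : a = b := by
  obtain ⟨c, hc⟩ := Set.ncard_eq_one.1 (hK.2 v)
  have h1 : a ∈ K.neighborSet v := ha
  have h2 : b ∈ K.neighborSet v := hb
  rw [hc] at h1 h2
  exact (Set.mem_singleton_iff.1 h1).trans (Set.mem_singleton_iff.1 h2).symm

theorem aux_exists {V : Type*} {G K : SimpleGraph V} (hK : IsOneFactor G K) (v : V) :
    ∃ a, K.Adj v a := by
  obtain ⟨c, hc⟩ := Set.ncard_eq_one.1 (hK.2 v)
  have : c ∈ K.neighborSet v := by rw [hc]; rfl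
  exact ⟨c, this⟩

/-- One-factors which are nested are equal. -/
theorem aux_eq {V : Type*} {G K M : SimpleGraph V} (hK : IsOneFactor G K)
    (hM : IsOneFactor G M) (h : ∀ v w, K.Adj v w → M.Adj v w) : K = M := by
  ext v w
  refine ⟨h v w, fun hw => ?_⟩
  obtain ⟨a, ha⟩ := aux_exists hK v
  rw [aux_unique hM hw (h v a ha)]
  exact ha

/-- A perfect matching of a Hamiltonian cycle `M ∪ N` is `M` or `N`. -/
theorem aux_ham {V : Type*} {G K M N : SimpleGraph V} (hK : IsOneFactor G K)
    (hM : IsOneFactor G M) (hN : IsOneFactor G N) (hc : (M ⊔ N).Connected)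
    (hle : ∀ v w, K.Adj v w → M.Adj v w ∨ N.Adj v w) : K = M ∨ K = N := by
  have step : ∀ v w, (M ⊔ N).Adj v w → (∃ x, K.Adj v x ∧ M.Adj v x) →
      ∃ x, K.Adj w x ∧ M.Adj w x := by
    rintro v w hvw ⟨x, hx, hx'⟩
    rcases hvw with h | h
    · have := aux_unique hM h hx'
      subst this
      exact ⟨v, hx.symm, hx'.symm⟩
    · obtain ⟨y, hy⟩ := aux_exists hK w
      rcases hle w y hy with h' | h'
      · exact ⟨y, hy, h'⟩
      · have := aux_unique hN h' h.symm
        subst this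
        have := aux_unique hK hx hy.symm
        subst this
        exact ⟨_, hx.symm, hx'.symm⟩
  have all : ∀ v w, (M ⊔ N).Reachable v w → (∃ x, K.Adj v x ∧ M.Adj v x) →
      ∃ x, K.Adj w x ∧ M.Adj w x := by
    rintro v w ⟨p⟩
    induction p with
    | nil => exact id
    | cons h p ih => exact fun hv => ih (step _ _ h hv)
  by_cases hS : ∃ v x, K.Adj v x ∧ M.Adj v x
  · obtain ⟨v, hv⟩ := hS
    left
    refine aux_eq hK hM fun a b hab => ?_
    obtain ⟨x, hx, hx'⟩ := all v a (hc.preconnected v a) hv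
    rw [aux_unique hK hab hx]
    exact hx'
  · right
    refine aux_eq hK hN fun a b hab => ?_
    rcases hle a b hab with h | h
    · exact absurd ⟨a, b, hab, h⟩ hS
    · exact h

/-- a cubic graph with the PMH-property is not 2-factor Hamiltonian if and
only if it admits a perfect matching which extends to a Hamiltonian cycle in exactly
one way. -/
theorem stmt_7 {V : Type*} [Fintype V] (G : SimpleGraph V)
    (hcubic : ∀ v : V, (G.neighborSet v).ncard = 3)
    (hpmh : HasPMHProperty G) :
    ¬ TwoFactorHamiltonian G ↔
      ∃ M, IsOneFactor G M ∧
        ∃! N, IsOneFactor G N ∧ IsHamiltonianCycleOf G (M ⊔ N) := by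
  constructor
  · intro hnot
    have hex : ∃ F, IsTwoFactor G F := by
      obtain ⟨M, hM⟩ := hpmh.1
      obtain ⟨N, -, hH⟩ := hpmh.2 M hM
      exact ⟨_, hH.1⟩
    have : ∃ F, IsTwoFactor G F ∧ ¬ F.Connected := by
      by_contra hcon
      exact hnot ⟨hex, fun F hF => by_contra fun h => hcon ⟨F, hF, h⟩⟩
    obtain ⟨F, hF, hFc⟩ := this
    have hM := aux_compl hcubic hF
    obtain ⟨N, hN, hH⟩ := hpmh.2 _ hM
    have hN' := aux_compl hcubic hH.1
    have hd := aux_disj hM hN hH.1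
    have hF' : (G \ (G \ F ⊔ N)) ⊔ N = F := by
      ext v w
      have h1 := hd v w
      have h2 : F.Adj v w → G.Adj v w := fun h => hF.1 h
      have h3 : N.Adj v w → G.Adj v w := fun h => hN.1 h
      simp only [SimpleGraph.sup_adj, SimpleGraph.sdiff_adj] at h1 ⊢
      tauto
    have key : ∀ K, IsOneFactor G K ∧ IsHamiltonianCycleOf G ((G \ (G \ F ⊔ N)) ⊔ K) →
        K = G \ F := by
      rintro K ⟨hK, hKH⟩
      have hdK := aux_disj hN' hK hKH.1
      rcases aux_ham hK hM hN hH.2 (fun v w hvw => by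
        by_contra hcon
        refine hdK v w ?_ hvw
        rw [SimpleGraph.sdiff_adj, SimpleGraph.sup_adj]
        exact ⟨hK.1 hvw, hcon⟩) with h | h
      · exact h
      · subst h
        rw [hF'] at hKH
        exact absurd hKH.2 hFc
    obtain ⟨K, hK, hKH⟩ := hpmh.2 _ hN'
    refine ⟨_, hN', K, ⟨hK, hKH⟩, fun L hL => ?_⟩
    rw [key L hL, key K ⟨hK, hKH⟩]
  · rintro ⟨M, hM, N, ⟨hN, hH⟩, huniq⟩ h2
    have hN' := aux_compl hcubic hH.1
    have hT : IsTwoFactor G (M ⊔ (G \ (M ⊔ N))) := aux_sup hM hN' fun v w h h' => by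
      rw [SimpleGraph.sdiff_adj, SimpleGraph.sup_adj] at h'
      exact h'.2 (Or.inl h)
    have e := huniq _ ⟨hN', hT, h2.2 _ hT⟩
    obtain ⟨v⟩ := hH.2.nonempty
    obtain ⟨a, ha⟩ := aux_exists hN' v
    have hb := ha
    rw [e] at hb
    rw [SimpleGraph.sdiff_adj, SimpleGraph.sup_adj] at ha
    exact ha.2 (Or.inr hb)
end
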